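/- arXiv:2211.03655 — 3 statements merged into one kernel-verified Lean document; each statement's English description precedes it below -/
import Mathlib

section
/- Let 0 < p < 2 and let f be holomorphic and zero-free on the unit disk 𝔻 (f(z) ≠ 0 for all z ∈ 𝔻). Then the function Φ_p(r) = (1/2π) ∫₀^{2π} |f(√r · e^{iθ})|^p dθ is convex on the interval (0,1). -/
open MeasureTheory Metric

/-!
A zero-free holomorphic `f` on a disk has a holomorphic logarithm, hence `‖f‖ ^ p = ‖g‖ ^ 2` for
the holomorphic function `g = f ^ (p / 2)`. If `g` has Taylor coefficients `a n` at the centre,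
Parseval's identity turns the mean of `‖g‖ ^ 2` over the circle of radius `√r` into
`∑ ‖a n‖ ^ 2 * r ^ n`, a power series in `r` with nonnegative coefficients, which is convex.
-/

section HolomorphicPowers

variable {f : ℂ → ℂ} {c : ℂ} {R : ℝ}

lemma exists_differentiableOn_eqOn_cexp (hf : DifferentiableOn ℂ f (ball c R))
    (hf0 : ∀ z ∈ ball c R, f z ≠ 0) :
    ∃ L : ℂ → ℂ, DifferentiableOn ℂ L (ball c R) ∧
      Set.EqOn f (fun z => Complex.exp (L z)) (ball c R) := by
  have hlogDeriv : DifferentiableOn ℂ (logDeriv f) (ball c R) :=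
    (hf.deriv isOpen_ball).div hf hf0
  obtain ⟨L, hL⟩ := hlogDeriv.isExactOn_ball
  have hLd : DifferentiableOn ℂ L (ball c R) :=
    fun z hz => (hL z hz).differentiableAt.differentiableWithinAt
  have hlogDeriv_eq : Set.EqOn (logDeriv f) (logDeriv fun z => Complex.exp (L z)) (ball c R) := by
    intro z hz
    rw [logDeriv_apply (fun z => Complex.exp (L z)), (hL z hz).cexp.deriv,
      mul_div_cancel_left₀ _ (Complex.exp_ne_zero _)]
  obtain ⟨k, hk, hfk⟩ := (logDeriv_eqOn_iff hf hLd.cexp isOpen_ball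
    (convex_ball c R).isPreconnected (fun _ _ => Complex.exp_ne_zero _) hf0).1 hlogDeriv_eq
  refine ⟨fun z => Complex.log k + L z, hLd.const_add _, fun z hz => ?_⟩
  simp only [hfk hz, Pi.smul_apply, smul_eq_mul, Complex.exp_add, Complex.exp_log hk]

lemma exists_differentiableOn_norm_eq_norm_rpow (q : ℝ) (hf : DifferentiableOn ℂ f (ball c R))
    (hf0 : ∀ z ∈ ball c R, f z ≠ 0) :
    ∃ g : ℂ → ℂ, DifferentiableOn ℂ g (ball c R) ∧ ∀ z ∈ ball c R, ‖g z‖ = ‖f z‖ ^ q := by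
  obtain ⟨L, hL, hfL⟩ := exists_differentiableOn_eqOn_cexp hf hf0
  refine ⟨fun z => Complex.exp (q * L z), (hL.const_mul _).cexp, fun z hz => ?_⟩
  rw [hfL hz, Complex.norm_exp, Complex.norm_exp, Complex.re_ofReal_mul, ← Real.exp_mul, mul_comm]

end HolomorphicPowers

section Parseval

variable (a : ℕ → ℂ) (c : ℂ) (s : ℝ)

lemma circleAverage_norm_sum_mul_pow_sq (t : Finset ℕ) :
    Real.circleAverage (fun z => ‖∑ n ∈ t, a n * (z - c) ^ n‖ ^ 2) c s =
      ∑ n ∈ t, ‖a n‖ ^ 2 * (s ^ 2) ^ n := by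
  let P : Polynomial ℂ := ∑ n ∈ t, Polynomial.monomial n (a n * (s : ℂ) ^ n)
  have hcoeff (n : ℕ) : P.coeff n = if n ∈ t then a n * (s : ℂ) ^ n else 0 := by
    simp [P, Polynomial.finsetSum_coeff, Polynomial.coeff_monomial]
  have hsupport : P.support ⊆ t := fun n hn => by
    by_contra hnt
    simp [hcoeff, hnt] at hn
  have heval (z : ℂ) : ∑ n ∈ t, a n * (s * z + c - c) ^ n = P.eval z := by
    simp [P, Polynomial.eval_finsetSum, mul_pow, mul_assoc]
  rw [Real.circleAverage_eq_circleAverage_zero_one]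
  simp_rw [heval]
  calc Real.circleAverage (fun z => ‖P.eval z‖ ^ 2) 0 1
      = ∑ n ∈ P.support, ‖P.coeff n‖ ^ 2 := P.sum_sq_norm_coeff_eq_circleAverage.symm
    _ = ∑ n ∈ t, ‖P.coeff n‖ ^ 2 :=
        Polynomial.sum_eq_of_subset (fun _ b => ‖b‖ ^ 2) (by simp) hsupport
    _ = ∑ n ∈ t, ‖a n‖ ^ 2 * (s ^ 2) ^ n := Finset.sum_congr rfl fun n hn => by
        rw [hcoeff, if_pos hn, norm_mul, norm_pow, Complex.norm_real, mul_pow, pow_right_comm,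
          Real.norm_eq_abs, sq_abs]

variable {a c s}

lemma hasSum_circleAverage_norm_sq {g : ℂ → ℂ}
    (hg : ∀ z ∈ sphere c |s|, HasSum (fun n => a n * (z - c) ^ n) (g z)) :
    HasSum (fun n => ‖a n‖ ^ 2 * (s ^ 2) ^ n)
      (Real.circleAverage (fun z => ‖g z‖ ^ 2) c s) := by
  have hsummable : Summable fun n => ‖a n‖ * |s| ^ n := by
    simpa using (hg _ (circleMap_mem_sphere' c s 0)).summable.norm
  simp only [HasSum, SummationFilter.unconditional_filter,
    ← circleAverage_norm_sum_mul_pow_sq a c s, Real.circleAverage_def]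
  refine (intervalIntegral.tendsto_integral_filter_of_dominated_convergence
    (fun _ => (∑' n, ‖a n‖ * |s| ^ n) ^ 2) ?_ ?_ intervalIntegrable_const ?_).const_smul _
  · exact .of_forall fun t => Continuous.aestronglyMeasurable (by fun_prop)
  · refine .of_forall fun t => .of_forall fun θ _ => ?_
    rw [norm_pow, norm_norm]
    gcongr
    calc ‖∑ n ∈ t, a n * (circleMap c s θ - c) ^ n‖
        ≤ ∑ n ∈ t, ‖a n * (circleMap c s θ - c) ^ n‖ := norm_sum_le _ _
      _ = ∑ n ∈ t, ‖a n‖ * |s| ^ n := by simp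
      _ ≤ ∑' n, ‖a n‖ * |s| ^ n := hsummable.sum_le_tsum t fun _ _ => by positivity
  · exact .of_forall fun θ _ => (hg _ (circleMap_mem_sphere' c s θ)).norm.pow 2

end Parseval

section Convexity

lemma convexOn_of_hasSum {ι 𝕜 E β : Type*} [Semiring 𝕜] [PartialOrder 𝕜] [AddCommMonoid E]
    [SMul 𝕜 E] [AddCommMonoid β] [PartialOrder β] [IsOrderedAddMonoid β] [TopologicalSpace β]
    [OrderClosedTopology β] [ContinuousAdd β] [DistribSMul 𝕜 β] [ContinuousConstSMul 𝕜 β]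
    {s : Set E} {f : ι → E → β} {F : E → β} (hs : Convex 𝕜 s) (hf : ∀ i, ConvexOn 𝕜 s (f i))
    (hF : ∀ x ∈ s, HasSum (fun i => f i x) (F x)) : ConvexOn 𝕜 s F :=
  ⟨hs, fun x hx y hy _ _ hu hv huv =>
    hasSum_le (fun i => (hf i).2 hx hy hu hv huv) (hF _ (hs hx hy hu hv huv))
      (((hF x hx).const_smul _).add ((hF y hy).const_smul _))⟩

lemma sphere_abs_sqrt_subset_ball {X : Type*} [PseudoMetricSpace X] {c : X} {r R : ℝ} (hR : 0 ≤ R)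
    (hr : r ∈ Set.Ico 0 (R ^ 2)) : sphere c |Real.sqrt r| ⊆ ball c R := by
  rw [abs_of_nonneg (Real.sqrt_nonneg r)]
  exact sphere_subset_ball ((Real.sqrt_lt hr.1 hR).2 hr.2)

lemma convexOn_circleAverage_norm_sq {g : ℂ → ℂ} {c : ℂ} {R : ℝ} (hR : 0 ≤ R)
    (hg : DifferentiableOn ℂ g (ball c R)) :
    ConvexOn ℝ (Set.Ico 0 (R ^ 2))
      (fun r => Real.circleAverage (fun z => ‖g z‖ ^ 2) c (Real.sqrt r)) := by
  let a (n : ℕ) : ℂ := (n.factorial : ℂ)⁻¹ * iteratedDeriv n g c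
  have htaylor (z : ℂ) (hz : z ∈ ball c R) : HasSum (fun n => a n * (z - c) ^ n) (g z) := by
    simpa only [a, smul_eq_mul, mul_assoc, mul_comm, mul_left_comm] using
      Complex.hasSum_taylorSeries_on_ball hg hz
  have hterm (n : ℕ) : ConvexOn ℝ (Set.Ico 0 (R ^ 2)) (fun r => ‖a n‖ ^ 2 * r ^ n) :=
    ((convexOn_pow n).subset Set.Ico_subset_Ici_self (convex_Ico _ _)).smul (sq_nonneg ‖a n‖)
  refine convexOn_of_hasSum (convex_Ico _ _) hterm fun r hr => ?_
  simpa only [Real.sq_sqrt hr.1] using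
    hasSum_circleAverage_norm_sq fun z hz => htaylor z (sphere_abs_sqrt_subset_ball hR hr hz)

end Convexity

theorem circle_means_convex_zero_free_general (p : ℝ) {f : ℂ → ℂ} {c : ℂ} {R : ℝ} (hR : 0 ≤ R)
    (hf : DifferentiableOn ℂ f (ball c R)) (hf0 : ∀ z ∈ ball c R, f z ≠ 0) :
    ConvexOn ℝ (Set.Ico 0 (R ^ 2))
      (fun r => Real.circleAverage (fun z => ‖f z‖ ^ p) c (Real.sqrt r)) := by
  obtain ⟨g, hg, hgf⟩ := exists_differentiableOn_norm_eq_norm_rpow (p / 2) hf hf0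
  refine (convexOn_circleAverage_norm_sq hR hg).congr fun r hr => ?_
  refine Real.circleAverage_congr_sphere fun z hz => ?_
  have hzR : z ∈ ball c R := sphere_abs_sqrt_subset_ball hR hr hz
  simp only [hgf z hzR, ← Real.rpow_mul_natCast (norm_nonneg (f z)), Nat.cast_ofNat,
    div_mul_cancel₀ p two_ne_zero]

theorem circle_means_convex_zero_free
    (p : ℝ) (hp0 : 0 < p) (hp : p < 2)
    (f : ℂ → ℂ) (hf : DifferentiableOn ℂ f (ball (0 : ℂ) 1))
    (hf0 : ∀ z ∈ ball (0 : ℂ) 1, f z ≠ 0) :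
    ConvexOn ℝ (Set.Ioo (0 : ℝ) 1)
      (fun r => (1 / (2 * Real.pi)) *
        ∫ θ in (0 : ℝ)..(2 * Real.pi),
          ‖f ((Real.sqrt r : ℂ) * Complex.exp (θ * Complex.I))‖ ^ p) := by
  simpa [Real.circleAverage, circleMap] using (circle_means_convex_zero_free_general p zero_le_one
    hf hf0).subset (by simpa using Set.Ioo_subset_Ico_self) (convex_Ioo 0 1)
end

section
/- Let q ≥ 2, let 1 < α < β, and set r = √(α/β). For every holomorphic f on the unit disk 𝔻 with ∫_𝔻 |f(z)|^q dA_β(z) < ∞, one has ((α−1)/π) ∫_𝔻 |f(rz)|^q (1−|z|²)^{α−2} dA(z) ≤ ((β−1)/π) ∫_𝔻 |f(z)|^q (1−|z|²)^{β−2} dA(z). -/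
open MeasureTheory Metric

/-!
Let `Φ s` be the average of `|f| ^ q` over the circle `|z| = √s`. For `q ≥ 2` the function `Φ` is
convex on `[0, 1)`: up to a constant, `Φ' s` is an average over `t ∈ [0, 1]` of the means of
`Δ |f| ^ q` over the circles `|z| = √(t s)`, and `Δ |f| ^ q` is a multiple of
`|f| ^ (q - 2) |f'| ^ 2`, which is subharmonic, so that its circle means increase with the radius.
The zeros of `f` are avoided by replacing `|f| ^ 2` with `|f| ^ 2 + ε` and letting `ε → 0`.

The map `z ↦ |z| ^ 2` pushes `dA_γ` forward to the Beta distribution with parameters `1, γ - 1`.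
If `X` and `Z` are independent with `X ∼ Beta(1, α - 1)` and `Z ∼ Beta(α, β - α)`, then
`X Z ∼ Beta(1, β - 1)` and `E Z = α / β = r ^ 2`, so Jensen's inequality conditionally on `X` gives
`E Φ(r ^ 2 X) ≤ E Φ(X Z)`, which is the claim.
-/

section CircleAverage
open Real Set InnerProductSpace
open scoped ContDiff Laplacian Topology

variable {E : Type*} [NormedAddCommGroup E] [NormedSpace ℝ E] {u : ℂ → E} {c : ℂ} {R ρ : ℝ}

/-- The derivative of `u` along the flow `t ↦ c + exp (t v) (z - c)`: the radial derivative `ρ ∂/∂ρ`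
about `c` for `v = 1`, and the angular derivative `∂/∂θ` for `v = I`. -/
noncomputable def spiralDeriv (c v : ℂ) (u : ℂ → E) (z : ℂ) : E :=
  fderiv ℝ u z (v * (z - c))

theorem contDiffOn_spiralDeriv (hu : ContDiffOn ℝ 2 u (ball c R)) (v : ℂ) :
    ContDiffOn ℝ 1 (spiralDeriv c v u) (ball c R) :=
  (hu.fderiv_of_isOpen isOpen_ball le_rfl).clm_apply (by fun_prop)

theorem continuousOn_laplacian_ball (hu : ContDiffOn ℝ 2 u (ball c R)) :
    ContinuousOn (Δ u) (ball c R) := by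
  have hD : ContinuousOn (iteratedFDeriv ℝ 2 u) (ball c R) :=
    (hu.continuousOn_iteratedFDerivWithin le_rfl isOpen_ball.uniqueDiffOn).congr
      fun z hz => (iteratedFDerivWithin_of_isOpen 2 isOpen_ball hz).symm
  rw [laplacian_eq_iteratedFDeriv_complexPlane]
  exact (hD.eval_const _).add (hD.eval_const _)

theorem spiralDeriv_spiralDeriv (hu : ContDiffOn ℝ 2 u (ball c R)) (v : ℂ) {z : ℂ}
    (hz : z ∈ ball c R) :
    spiralDeriv c v (spiralDeriv c v u) z =
      fderiv ℝ (fderiv ℝ u) z (v * (z - c)) (v * (z - c)) + fderiv ℝ u z (v * (v * (z - c))) := by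
  have hDu : DifferentiableAt ℝ (fderiv ℝ u) z :=
    ((hu.fderiv_of_isOpen isOpen_ball le_rfl).contDiffAt (isOpen_ball.mem_nhds hz)).differentiableAt
      one_ne_zero
  have hfield : HasFDerivAt (fun w : ℂ => v * (w - c)) (v • ContinuousLinearMap.id ℝ ℂ) z :=
    ((hasFDerivAt_id z).sub_const c).const_mul v
  have hspiral : HasFDerivAt (spiralDeriv c v u) _ z := hDu.hasFDerivAt.clm_apply hfield
  rw [spiralDeriv, hspiral.fderiv]
  simp [add_comm]

theorem spiralDeriv_one_add_spiralDeriv_I (hu : ContDiffOn ℝ 2 u (ball c R)) {z : ℂ}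
    (hz : z ∈ ball c R) :
    spiralDeriv c 1 (spiralDeriv c 1 u) z + spiralDeriv c Complex.I (spiralDeriv c Complex.I u) z =
      ‖z - c‖ ^ 2 • Δ u z := by
  rw [spiralDeriv_spiralDeriv hu _ hz, spiralDeriv_spiralDeriv hu _ hz,
    laplacian_eq_iteratedFDeriv_complexPlane]
  set B := fderiv ℝ (fderiv ℝ u) z
  obtain ⟨x, y, hxy⟩ : ∃ x y : ℝ, z - c = x • (1 : ℂ) + y • Complex.I :=
    ⟨(z - c).re, (z - c).im, by apply Complex.ext <;> simp⟩
  have hI : Complex.I * (z - c) = x • Complex.I - y • (1 : ℂ) := by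
    rw [hxy]; apply Complex.ext <;> simp
  have hII : Complex.I * (Complex.I * (z - c)) = -(z - c) := by
    rw [← mul_assoc, Complex.I_mul_I, neg_one_mul]
  have hnorm : ‖z - c‖ ^ 2 = x ^ 2 + y ^ 2 := by
    rw [hxy, ← Complex.normSq_eq_norm_sq]; simp [Complex.normSq_apply, sq]
  rw [one_mul, one_mul, hII, hI, hnorm, hxy]
  simp only [iteratedFDeriv_two_apply, Matrix.cons_val_zero, Matrix.cons_val_one, map_add, map_sub,
    map_neg, map_smul, add_apply, sub_apply, smul_apply]
  module

theorem circleMap_mem_ball {r : ℝ} (hr : |r| < R) (θ : ℝ) : circleMap c r θ ∈ ball c R := by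
  simpa [circleMap] using hr

theorem hasDerivAt_circleMap_radius (c : ℂ) (r θ : ℝ) :
    HasDerivAt (fun r => circleMap c r θ) (Complex.exp (θ * Complex.I)) r := by
  simpa [circleMap] using ((Complex.ofRealCLM.hasDerivAt (x := r)).mul_const
    (Complex.exp (θ * Complex.I))).const_add c

theorem hasDerivAt_circleAverage (hu : ContDiffOn ℝ 1 u (ball c R)) (hρ : ρ ∈ Ioo 0 R) :
    HasDerivAt (circleAverage u c) (ρ⁻¹ • circleAverage (spiralDeriv c 1 u) c ρ) ρ := by
  have hDu : ContinuousOn (fderiv ℝ u) (ball c R) :=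
    hu.continuousOn_fderiv_of_isOpen isOpen_ball le_rfl
  obtain ⟨r, hρr, hrR⟩ := exists_between hρ.2
  obtain ⟨M, hM⟩ := (isCompact_closedBall c r).exists_bound_of_continuousOn
    (hDu.mono (closedBall_subset_ball hrR))
  have hball {x : ℝ} (hx : x ∈ Ioo 0 r) (θ : ℝ) : circleMap c x θ ∈ ball c r :=
    circleMap_mem_ball (by rw [abs_of_pos hx.1]; exact hx.2) θ
  have hcont {x : ℝ} (hx : x ∈ Ioo 0 r) : Continuous fun θ => u (circleMap c x θ) :=
    hu.continuousOn.comp_continuous (by fun_prop) fun θ => ball_subset_ball hrR.le (hball hx θ)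
  have hnhds : Ioo 0 r ∈ 𝓝 ρ := Ioo_mem_nhds hρ.1 hρr
  have hderiv := (intervalIntegral.hasDerivAt_integral_of_dominated_loc_of_deriv_le
    (F := fun x θ => u (circleMap c x θ)) (a := 0) (b := 2 * π) (μ := volume)
    (F' := fun x θ => fderiv ℝ u (circleMap c x θ) (Complex.exp (θ * Complex.I)))
    (bound := fun _ => M) hnhds
    (Filter.eventually_of_mem hnhds fun x hx => (hcont hx).aestronglyMeasurable)
    ((hcont ⟨hρ.1, hρr⟩).intervalIntegrable _ _)
    (Continuous.aestronglyMeasurable <| (hDu.comp_continuous (by fun_prop) fun θ =>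
      ball_subset_ball hrR.le (hball ⟨hρ.1, hρr⟩ θ)).clm_apply (by fun_prop))
    (.of_forall fun θ _ x hx => ?_) intervalIntegrable_const
    (.of_forall fun θ _ x hx => ?_)).2
  · convert! hderiv.const_smul (2 * π)⁻¹ using 1
    rw [circleAverage_def, smul_comm, ← intervalIntegral.integral_smul]
    congr 2 with θ
    rw [spiralDeriv, ← map_smul]
    simp [circleMap, hρ.1.ne']
  · calc ‖fderiv ℝ u (circleMap c x θ) (Complex.exp (θ * Complex.I))‖
        ≤ ‖fderiv ℝ u (circleMap c x θ)‖ * ‖Complex.exp (θ * Complex.I)‖ :=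
          ContinuousLinearMap.le_opNorm _ _
      _ ≤ M := by simpa using hM _ (ball_subset_closedBall (hball hx θ))
  · exact (hu.differentiableOn one_ne_zero |>.differentiableAt (isOpen_ball.mem_nhds
      (ball_subset_ball hrR.le (hball hx θ)))).hasFDerivAt.comp_hasDerivAt x
      (hasDerivAt_circleMap_radius c x θ)

theorem circleAverage_spiralDeriv_I [CompleteSpace E] (hu : ContDiffOn ℝ 1 u (ball c R))
    (hρ : |ρ| < R) : circleAverage (spiralDeriv c Complex.I u) c ρ = 0 := by
  have hderiv (θ : ℝ) : HasDerivAt (fun θ => u (circleMap c ρ θ))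
      (spiralDeriv c Complex.I u (circleMap c ρ θ)) θ := by
    have hmem : circleMap c ρ θ ∈ ball c R := circleMap_mem_ball hρ θ
    have hdiff : DifferentiableAt ℝ u (circleMap c ρ θ) :=
      (hu.differentiableOn one_ne_zero).differentiableAt (isOpen_ball.mem_nhds hmem)
    simpa [spiralDeriv, mul_comm, Function.comp_def] using
      hdiff.hasFDerivAt.comp_hasDerivAt θ (hasDerivAt_circleMap c ρ θ)
  have hcont : Continuous fun θ => spiralDeriv c Complex.I u (circleMap c ρ θ) :=
    ((hu.continuousOn_fderiv_of_isOpen isOpen_ball le_rfl).comp_continuous (by fun_prop)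
      (circleMap_mem_ball hρ)).clm_apply (by fun_prop)
  rw [circleAverage_def, intervalIntegral.integral_eq_sub_of_hasDerivAt (fun θ _ => hderiv θ)
    (hcont.intervalIntegrable _ _), (periodic_circleMap c ρ).eq, sub_self, smul_zero]

theorem continuousOn_circleAverage_Ico (hu : ContinuousOn u (ball c R)) :
    ContinuousOn (circleAverage u c) (Ico 0 R) :=
  (hu.mono fun _ hz => mem_ball_iff_norm.2 hz.2).circleAverage fun _ hr => hr.1

theorem hasDerivAt_circleAverage_spiralDeriv_one [CompleteSpace E]
    (hu : ContDiffOn ℝ 2 u (ball c R)) (hρ : ρ ∈ Ioo 0 R) :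
    HasDerivAt (circleAverage (spiralDeriv c 1 u) c) (ρ • circleAverage (Δ u) c ρ) ρ := by
  have habs : |ρ| < R := by rw [abs_of_pos hρ.1]; exact hρ.2
  have hint {v : ℂ → E} (hv : ContinuousOn v (ball c R)) : CircleIntegrable v c ρ :=
    (hv.mono (sphere_subset_ball habs)).circleIntegrable'
  have hangular := contDiffOn_spiralDeriv hu Complex.I
  have hsecond (v : ℂ) : ContinuousOn (spiralDeriv c v (spiralDeriv c v u)) (ball c R) :=
    ((contDiffOn_spiralDeriv hu v).continuousOn_fderiv_of_isOpen isOpen_ball le_rfl).clm_apply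
      (by fun_prop)
  convert hasDerivAt_circleAverage (contDiffOn_spiralDeriv hu 1) hρ using 1
  calc ρ • circleAverage (Δ u) c ρ
      = ρ⁻¹ • circleAverage (ρ ^ 2 • Δ u) c ρ := by
        rw [circleAverage_smul, smul_smul]
        field_simp [hρ.1.ne']
    _ = ρ⁻¹ • circleAverage (spiralDeriv c 1 (spiralDeriv c 1 u) +
          spiralDeriv c Complex.I (spiralDeriv c Complex.I u)) c ρ := by
        congr 1
        refine circleAverage_congr_sphere fun z hz => ?_
        rw [abs_of_pos hρ.1] at hz
        rw [Pi.add_apply, Pi.smul_apply, spiralDeriv_one_add_spiralDeriv_I hu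
          (sphere_subset_ball hρ.2 hz), mem_sphere_iff_norm.1 hz]
    _ = ρ⁻¹ • circleAverage (spiralDeriv c 1 (spiralDeriv c 1 u)) c ρ := by
        rw [circleAverage_add (hint (hsecond 1)) (hint (hsecond _)),
          circleAverage_spiralDeriv_I hangular habs, add_zero]

theorem circleAverage_spiralDeriv_one_eq_integral [CompleteSpace E]
    (hu : ContDiffOn ℝ 2 u (ball c R)) (hρ : ρ ∈ Ico 0 R) :
    circleAverage (spiralDeriv c 1 u) c ρ = ∫ t in 0..ρ, t • circleAverage (Δ u) c t := by
  have hsub : Icc 0 ρ ⊆ Ico 0 R := Icc_subset_Ico_right hρ.2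
  rw [intervalIntegral.integral_eq_sub_of_hasDerivAt_of_le hρ.1
    ((continuousOn_circleAverage_Ico (contDiffOn_spiralDeriv hu 1).continuousOn).mono hsub)
    (fun t ht => hasDerivAt_circleAverage_spiralDeriv_one hu ⟨ht.1, ht.2.trans hρ.2⟩)]
  · simp [spiralDeriv]
  · refine ContinuousOn.intervalIntegrable_of_Icc hρ.1 ?_
    exact continuousOn_id.smul
      ((continuousOn_circleAverage_Ico (continuousOn_laplacian_ball hu)).mono hsub)

theorem sqrt_mem_Ico (hR : 0 ≤ R) {s : ℝ} (hs : s ∈ Ico 0 (R ^ 2)) : √s ∈ Ico 0 R :=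
  ⟨sqrt_nonneg s, (sqrt_lt_sqrt hs.1 hs.2).trans_eq (sqrt_sq hR)⟩

theorem continuousOn_circleAverage_sqrt (hu : ContinuousOn u (ball c R)) (hR : 0 ≤ R) :
    ContinuousOn (fun s => circleAverage u c √s) (Ico 0 (R ^ 2)) :=
  (continuousOn_circleAverage_Ico hu).comp continuous_sqrt.continuousOn fun _ => sqrt_mem_Ico hR

theorem hasDerivAt_circleAverage_sqrt [CompleteSpace E] (hu : ContDiffOn ℝ 2 u (ball c R))
    (hR : 0 ≤ R) {s : ℝ} (hs : s ∈ Ioo 0 (R ^ 2)) :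
    HasDerivAt (fun s => circleAverage u c √s)
      ((2⁻¹ : ℝ) • ∫ y in (0 : ℝ)..1, y • circleAverage (Δ u) c (√s * y)) s := by
  have hρ : √s ∈ Ioo 0 R := ⟨sqrt_pos.2 hs.1, (sqrt_mem_Ico hR ⟨hs.1.le, hs.2⟩).2⟩
  convert! (hasDerivAt_circleAverage (hu.of_le one_le_two) hρ).scomp s (hasDerivAt_sqrt hs.1.ne')
    using 1
  have hscale : ∫ y in (0 : ℝ)..1, (√s * y) • circleAverage (Δ u) c (√s * y) =
      (√s)⁻¹ • ∫ t in 0..√s, t • circleAverage (Δ u) c t := by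
    simpa using intervalIntegral.integral_comp_mul_left (a := 0) (b := 1)
      (fun t => t • circleAverage (Δ u) c t) hρ.1.ne'
  rw [circleAverage_spiralDeriv_one_eq_integral hu ⟨hρ.1.le, hρ.2⟩, ← hscale]
  simp_rw [mul_smul]
  rw [intervalIntegral.integral_smul, smul_smul]
  congr 1
  field_simp [hρ.1.ne']

theorem monotoneOn_circleAverage_of_laplacian_nonneg {u : ℂ → ℝ} (hu : ContDiffOn ℝ 2 u (ball c R))
    (hΔ : ∀ z ∈ ball c R, 0 ≤ Δ u z) : MonotoneOn (circleAverage u c) (Ico 0 R) := by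
  refine monotoneOn_of_hasDerivWithinAt_nonneg (convex_Ico 0 R)
    (continuousOn_circleAverage_Ico hu.continuousOn)
    (fun ρ hρ => (hasDerivAt_circleAverage (hu.of_le one_le_two)
      (by rwa [interior_Ico] at hρ)).hasDerivWithinAt) fun ρ hρ => ?_
  rw [interior_Ico] at hρ
  rw [circleAverage_spiralDeriv_one_eq_integral hu ⟨hρ.1.le, hρ.2⟩]
  refine smul_nonneg (inv_nonneg.2 hρ.1.le)
    (intervalIntegral.integral_nonneg hρ.1.le fun t ht => ?_)
  refine mul_nonneg ht.1
    (circleAverage_nonneg_of_nonneg fun z hz => hΔ z (sphere_subset_ball ?_ hz))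
  rw [abs_of_nonneg ht.1]
  exact ht.2.trans_lt hρ.2

theorem convexOn_circleAverage_sqrt {u : ℂ → ℝ} (hu : ContDiffOn ℝ 2 u (ball c R)) (hR : 0 ≤ R)
    (hΔ : MonotoneOn (circleAverage (Δ u) c) (Ico 0 R)) :
    ConvexOn ℝ (Ico 0 (R ^ 2)) fun s => circleAverage u c √s := by
  have hscaled {s y : ℝ} (hs : s ∈ Ioo 0 (R ^ 2)) (hy : y ∈ Icc (0 : ℝ) 1) : √s * y ∈ Ico 0 R := by
    obtain ⟨hs₀, hsR⟩ := sqrt_mem_Ico hR (Ioo_subset_Ico_self hs)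
    exact ⟨mul_nonneg hs₀ hy.1, (mul_le_of_le_one_right hs₀ hy.2).trans_lt hsR⟩
  have hint {s : ℝ} (hs : s ∈ Ioo 0 (R ^ 2)) :
      IntervalIntegrable (fun y => y • circleAverage (Δ u) c (√s * y)) volume 0 1 := by
    refine ContinuousOn.intervalIntegrable_of_Icc zero_le_one (continuousOn_id.smul ?_)
    exact (continuousOn_circleAverage_Ico (continuousOn_laplacian_ball hu)).comp
      (by fun_prop) fun y hy => hscaled hs hy
  have hderiv {s : ℝ} (hs : s ∈ Ioo 0 (R ^ 2)) := hasDerivAt_circleAverage_sqrt hu hR hs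
  refine MonotoneOn.convexOn_of_deriv (convex_Ico _ _)
    (continuousOn_circleAverage_sqrt hu.continuousOn hR) ?_ ?_ <;> rw [interior_Ico]
  · exact fun s hs => (hderiv hs).differentiableAt.differentiableWithinAt
  · intro s hs t ht hst
    rw [(hderiv hs).deriv, (hderiv ht).deriv]
    refine smul_le_smul_of_nonneg_left ?_ (by norm_num)
    refine intervalIntegral.integral_mono_on zero_le_one (hint hs) (hint ht) fun y hy => ?_
    exact smul_le_smul_of_nonneg_left (hΔ (hscaled hs hy) (hscaled ht hy)
      (mul_le_mul_of_nonneg_right (sqrt_le_sqrt hst) hy.1)) hy.1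

end CircleAverage

section Laplacian
open InnerProductSpace
open scoped ContDiff Laplacian Topology ComplexConjugate

theorem hasDerivAt_deriv_of_contDiffAt {F : Type*} [NormedAddCommGroup F] [NormedSpace ℝ F]
    {x : ℝ → F} {t : ℝ} (hx : ContDiffAt ℝ 2 x t) : HasDerivAt (deriv x) (deriv (deriv x) t) t :=
  ((hx.derivWithin (m := 1) le_rfl).differentiableAt one_ne_zero).hasDerivAt

theorem deriv_deriv_mul_comp {x y K : ℝ → ℝ} {t : ℝ} (hx : ContDiffAt ℝ 2 x t)
    (hy : ContDiffAt ℝ 2 y t) (hK : ContDiffAt ℝ 2 K (y t)) :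
    deriv (deriv fun s => x s * K (y s)) t =
      deriv (deriv x) t * K (y t) + 2 * (deriv x t * (deriv K (y t) * deriv y t)) +
        x t * (deriv (deriv K) (y t) * deriv y t ^ 2 + deriv K (y t) * deriv (deriv y) t) := by
  have hfirst : deriv (fun s => x s * K (y s)) =ᶠ[𝓝 t]
      fun s => deriv x s * K (y s) + x s * (deriv K (y s) * deriv y s) := by
    filter_upwards [hx.eventually (by simp), hy.eventually (by simp),
      hy.continuousAt.eventually (hK.eventually (by simp))] with s hxs hys hKs
    have hx₁ := (hxs.differentiableAt two_ne_zero).hasDerivAt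
    have hy₁ := (hys.differentiableAt two_ne_zero).hasDerivAt
    have hK₁ := (hKs.differentiableAt two_ne_zero).hasDerivAt
    exact (hx₁.mul (hK₁.comp s hy₁)).deriv
  have hx₁ := (hx.differentiableAt two_ne_zero).hasDerivAt
  have hy₁ := (hy.differentiableAt two_ne_zero).hasDerivAt
  have hK₁ := ((hK.differentiableAt two_ne_zero).hasDerivAt).comp t hy₁
  have hx₂ := hasDerivAt_deriv_of_contDiffAt hx
  have hy₂ := hasDerivAt_deriv_of_contDiffAt hy
  have hK₂ := (hasDerivAt_deriv_of_contDiffAt hK).comp t hy₁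
  rw [hfirst.deriv_eq]
  refine ((hx₂.mul hK₁).add (hx₁.mul (hK₂.mul hy₂))).deriv.trans ?_
  simp only [Function.comp_apply, Pi.mul_apply]
  ring

theorem deriv_deriv_norm_sq {F : Type*} [NormedAddCommGroup F] [InnerProductSpace ℝ F]
    {x : ℝ → F} {t : ℝ} (hx : ContDiffAt ℝ 2 x t) :
    deriv (deriv fun s => ‖x s‖ ^ 2) t =
      2 * (‖deriv x t‖ ^ 2 + inner ℝ (x t) (deriv (deriv x) t)) := by
  have hfirst : deriv (fun s => ‖x s‖ ^ 2) =ᶠ[𝓝 t] fun s => 2 * inner ℝ (x s) (deriv x s) := by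
    filter_upwards [hx.eventually (by simp)] with s hxs
    exact (hxs.differentiableAt two_ne_zero).hasDerivAt.norm_sq.deriv
  rw [hfirst.deriv_eq, (((hx.differentiableAt two_ne_zero).hasDerivAt.inner ℝ
    (hasDerivAt_deriv_of_contDiffAt hx)).const_mul 2).deriv, real_inner_self_eq_norm_sq, add_comm]

theorem iteratedFDeriv_two_eq_deriv_deriv {E F : Type*} [NormedAddCommGroup E] [NormedSpace ℝ E]
    [NormedAddCommGroup F] [NormedSpace ℝ F] {u : E → F} {z : E} (hu : ContDiffAt ℝ 2 u z) (v : E) :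
    iteratedFDeriv ℝ 2 u z ![v, v] = deriv (deriv fun t : ℝ => u (z + t • v)) 0 := by
  have hline : Filter.Tendsto (fun t : ℝ => z + t • v) (𝓝 0) (𝓝 z) :=
    Continuous.tendsto' (by fun_prop) _ _ (by simp)
  have hfirst : (deriv fun t : ℝ => u (z + t • v)) =ᶠ[𝓝 0] fun t => fderiv ℝ u (z + t • v) v := by
    filter_upwards [hline.eventually (hu.eventually (by simp))] with t ht
    exact (ht.differentiableAt two_ne_zero).deriv_comp_add_smul
  have hDu : DifferentiableAt ℝ (fderiv ℝ u) z :=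
    (hu.fderiv_right (m := 1) le_rfl).differentiableAt one_ne_zero
  have hDuv := hDu.hasFDerivAt.clm_apply (hasFDerivAt_const v z)
  have hsecond := DifferentiableAt.deriv_comp_add_smul (t := (0 : ℝ)) (y := v) (x := z)
    (f := fun w => fderiv ℝ u w v) (by simpa using hDuv.differentiableAt)
  rw [hfirst.deriv_eq, hsecond, zero_smul, add_zero, hDuv.fderiv]
  simp [iteratedFDeriv_two_apply]

theorem deriv_comp_add_smul_eventuallyEq {g : ℂ → ℂ} {z : ℂ} (hg : AnalyticAt ℂ g z) (v : ℂ) :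
    (deriv fun t : ℝ => g (z + t • v)) =ᶠ[𝓝 0] fun t => v * deriv g (z + t • v) := by
  have hline : Filter.Tendsto (fun t : ℝ => z + t • v) (𝓝 0) (𝓝 z) :=
    Continuous.tendsto' (by fun_prop) _ _ (by simp)
  filter_upwards [hline.eventually hg.eventually_analyticAt] with t ht
  rw [DifferentiableAt.deriv_comp_add_smul (ht.differentiableAt.restrictScalars ℝ),
    ht.differentiableAt.fderiv_restrictScalars ℝ]
  simp [mul_comm]

theorem deriv_deriv_comp_add_smul {g : ℂ → ℂ} {z : ℂ} (hg : AnalyticAt ℂ g z) (v : ℂ) :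
    deriv (deriv fun t : ℝ => g (z + t • v)) 0 = v ^ 2 * deriv (deriv g) z := by
  have hderiv := deriv_comp_add_smul_eventuallyEq hg.deriv v
  rw [(deriv_comp_add_smul_eventuallyEq hg v).deriv_eq, deriv_const_mul_field, hderiv.self_of_nhds]
  simp [sq, mul_assoc]

variable {g h : ℂ → ℂ} {K : ℝ → ℝ} {z : ℂ}

theorem contDiffAt_norm_sq_mul_comp_norm_sq {n : WithTop ℕ∞} (hg : AnalyticAt ℂ g z)
    (hh : AnalyticAt ℂ h z) (hK : ContDiffAt ℝ n K (‖g z‖ ^ 2)) :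
    ContDiffAt ℝ n (fun w => ‖h w‖ ^ 2 * K (‖g w‖ ^ 2)) z := by
  have hg' : ContDiffAt ℝ n g z := hg.contDiffAt.restrict_scalars ℝ
  have hh' : ContDiffAt ℝ n h z := hh.contDiffAt.restrict_scalars ℝ
  exact (hh'.norm_sq ℂ).mul (hK.comp z (hg'.norm_sq ℂ))

theorem deriv_deriv_norm_sq_mul_comp_norm_sq (hg : AnalyticAt ℂ g z) (hh : AnalyticAt ℂ h z)
    (hK : ContDiffAt ℝ 2 K (‖g z‖ ^ 2)) (v : ℂ) :
    deriv (deriv fun t : ℝ => ‖h (z + t • v)‖ ^ 2 * K (‖g (z + t • v)‖ ^ 2)) 0 =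
      2 * (‖v * deriv h z‖ ^ 2 + inner ℝ (h z) (v ^ 2 * deriv (deriv h) z)) * K (‖g z‖ ^ 2) +
      8 * deriv K (‖g z‖ ^ 2) * inner ℝ (h z) (v * deriv h z) * inner ℝ (g z) (v * deriv g z) +
      ‖h z‖ ^ 2 * (4 * deriv (deriv K) (‖g z‖ ^ 2) * inner ℝ (g z) (v * deriv g z) ^ 2 +
        2 * deriv K (‖g z‖ ^ 2) *
          (‖v * deriv g z‖ ^ 2 + inner ℝ (g z) (v ^ 2 * deriv (deriv g) z))) := by
  have hline {F : ℂ → ℂ} (hF : AnalyticAt ℂ F z) :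
      ContDiffAt ℝ 2 (fun t : ℝ => F (z + t • v)) 0 := by
    have hF' : ContDiffAt ℝ 2 F (z + (0 : ℝ) • v) := by simpa using hF.contDiffAt.restrict_scalars ℝ
    exact hF'.comp 0 (by fun_prop)
  have hderiv {F : ℂ → ℂ} (hF : AnalyticAt ℂ F z) :
      deriv (fun t : ℝ => F (z + t • v)) 0 = v * deriv F z := by
    simpa using (deriv_comp_add_smul_eventuallyEq hF v).self_of_nhds
  have hsq {F : ℂ → ℂ} (hF : AnalyticAt ℂ F z) :
      deriv (fun t : ℝ => ‖F (z + t • v)‖ ^ 2) 0 = 2 * inner ℝ (F z) (v * deriv F z) := by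
    rw [((hline hF).differentiableAt two_ne_zero).hasDerivAt.norm_sq.deriv, hderiv hF, zero_smul,
      add_zero]
  rw [deriv_deriv_mul_comp ((hline hh).norm_sq ℂ) ((hline hg).norm_sq ℂ) (by simpa using hK),
    deriv_deriv_norm_sq (hline hg), deriv_deriv_norm_sq (hline hh), deriv_deriv_comp_add_smul hg,
    deriv_deriv_comp_add_smul hh, hsq hg, hsq hh, hderiv hg, hderiv hh, zero_smul, add_zero]
  ring

theorem laplacian_norm_sq_mul_comp_norm_sq (hg : AnalyticAt ℂ g z) (hh : AnalyticAt ℂ h z)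
    (hK : ContDiffAt ℝ 2 K (‖g z‖ ^ 2)) :
    Δ (fun w => ‖h w‖ ^ 2 * K (‖g w‖ ^ 2)) z =
      4 * (‖deriv h z‖ ^ 2 * K (‖g z‖ ^ 2) +
        2 * deriv K (‖g z‖ ^ 2) * inner ℝ (h z * deriv g z) (deriv h z * g z) +
        ‖h z‖ ^ 2 * ‖deriv g z‖ ^ 2 *
          (deriv K (‖g z‖ ^ 2) + ‖g z‖ ^ 2 * deriv (deriv K) (‖g z‖ ^ 2))) := by
  have hsecond := iteratedFDeriv_two_eq_deriv_deriv (contDiffAt_norm_sq_mul_comp_norm_sq hg hh hK)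
  simp only [laplacian_eq_iteratedFDeriv_complexPlane, hsecond,
    deriv_deriv_norm_sq_mul_comp_norm_sq hg hh hK]
  generalize K (‖g z‖ ^ 2) = k₀, deriv K (‖g z‖ ^ 2) = k₁, deriv (deriv K) (‖g z‖ ^ 2) = k₂
  simp only [← Complex.normSq_eq_norm_sq, Complex.normSq_apply, Complex.inner, Complex.mul_re,
    Complex.mul_im, Complex.conj_re, Complex.conj_im, Complex.I_re, Complex.I_im, Complex.I_sq,
    Complex.neg_re, Complex.neg_im, Complex.one_re, Complex.one_im, one_pow]
  ring

theorem laplacian_norm_sq_mul_comp_norm_sq_nonneg (hg : AnalyticAt ℂ g z) (hh : AnalyticAt ℂ h z)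
    (hK : ContDiffAt ℝ 2 K (‖g z‖ ^ 2)) (hpos : 0 < K (‖g z‖ ^ 2))
    (hdisc : ‖g z‖ ^ 2 * deriv K (‖g z‖ ^ 2) ^ 2 ≤ K (‖g z‖ ^ 2) *
      (deriv K (‖g z‖ ^ 2) + ‖g z‖ ^ 2 * deriv (deriv K) (‖g z‖ ^ 2))) :
    0 ≤ Δ (fun w => ‖h w‖ ^ 2 * K (‖g w‖ ^ 2)) z := by
  rw [laplacian_norm_sq_mul_comp_norm_sq hg hh hK]
  generalize K (‖g z‖ ^ 2) = k₀, deriv K (‖g z‖ ^ 2) = k₁, deriv (deriv K) (‖g z‖ ^ 2) = k₂ at *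
  set b := h z * deriv g z with hb
  have hinner : inner ℝ (deriv h z) (conj (g z) * b) = inner ℝ b (deriv h z * g z) := by
    rw [Complex.inner, Complex.inner, ← Complex.conj_re (_ * conj b), map_mul, map_mul,
      Complex.conj_conj]
    ring_nf
  refine mul_nonneg zero_le_four (nonneg_of_mul_nonneg_right (a := k₀) ?_ hpos)
  rw [← mul_pow, ← norm_mul, ← hb]
  calc (0 : ℝ) ≤ ‖k₀ • deriv h z + k₁ • (conj (g z) * b)‖ ^ 2 := by positivity
    _ = k₀ ^ 2 * ‖deriv h z‖ ^ 2 + 2 * k₀ * k₁ * inner ℝ b (deriv h z * g z) +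
        ‖b‖ ^ 2 * (‖g z‖ ^ 2 * k₁ ^ 2) := by
      rw [norm_add_sq_real, inner_smul_left, inner_smul_right, hinner]
      simp only [norm_smul, norm_mul, mul_pow, Real.norm_eq_abs, sq_abs, RCLike.norm_conj,
        conj_trivial]
      ring
    _ ≤ k₀ ^ 2 * ‖deriv h z‖ ^ 2 + 2 * k₀ * k₁ * inner ℝ b (deriv h z * g z) +
        ‖b‖ ^ 2 * (k₀ * (k₁ + ‖g z‖ ^ 2 * k₂)) := by gcongr
    _ = _ := by ring

end Laplacian

section RegularisedPower
open Real Set InnerProductSpace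
open scoped ContDiff Laplacian Topology

variable {p ε k s : ℝ}

/-- The family `(s + ε) ^ (p - k) * (p * s + (k - 1) * ε)`, closed under differentiation up to
constants. Its member `k = 2` is the radial profile of the Laplacian of `(‖w‖ ^ 2 + ε) ^ p` up to
the factor `4 * p`, with `s = ‖w‖ ^ 2`. -/
noncomputable def powProfile (p ε k s : ℝ) : ℝ :=
  (s + ε) ^ (p - k) * (p * s + (k - 1) * ε)

theorem contDiffAt_add_rpow {n : WithTop ℕ∞} (hs : 0 < s + ε) :
    ContDiffAt ℝ n (fun t => (t + ε) ^ p) s :=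
  (contDiffAt_id.add contDiffAt_const).rpow_const_of_ne hs.ne'

theorem contDiffAt_powProfile {n : WithTop ℕ∞} (hs : 0 < s + ε) :
    ContDiffAt ℝ n (powProfile p ε k) s :=
  (contDiffAt_add_rpow hs).mul (by fun_prop)

theorem hasDerivAt_add_rpow (hs : 0 < s + ε) :
    HasDerivAt (fun t => (t + ε) ^ p) (p * (s + ε) ^ (p - 1)) s := by
  simpa using ((hasDerivAt_id s).add_const ε).rpow_const (p := p) (Or.inl hs.ne')

theorem hasDerivAt_powProfile (hs : 0 < s + ε) :
    HasDerivAt (powProfile p ε k) ((p - k + 1) * powProfile p ε (k + 1) s) s := by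
  have hlin : HasDerivAt (fun t => p * t + (k - 1) * ε) p s := by
    simpa using ((hasDerivAt_id s).const_mul p).add_const ((k - 1) * ε)
  have hsplit : (s + ε) ^ (p - k) = (s + ε) ^ (p - (k + 1)) * (s + ε) := by
    rw [← rpow_add_one hs.ne']; ring_nf
  convert! (hasDerivAt_add_rpow (p := p - k) hs).mul hlin using 1
  rw [powProfile, hsplit, sub_sub p k 1]
  ring

theorem deriv_deriv_add_rpow (hs : 0 < s + ε) :
    deriv (deriv fun t => (t + ε) ^ p) s = p * ((p - 1) * (s + ε) ^ (p - 2)) := by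
  have hnear : ∀ᶠ t in 𝓝 s, 0 < t + ε :=
    (by fun_prop : ContinuousAt (· + ε) s).eventually_const_lt hs
  have hfirst : (deriv fun t => (t + ε) ^ p) =ᶠ[𝓝 s] fun t => p * (t + ε) ^ (p - 1) :=
    hnear.mono fun t ht => (hasDerivAt_add_rpow ht).deriv
  rw [hfirst.deriv_eq, ((hasDerivAt_add_rpow hs).const_mul p).deriv]
  ring_nf

theorem deriv_deriv_powProfile (hs : 0 < s + ε) :
    deriv (deriv (powProfile p ε k)) s =
      (p - k + 1) * ((p - k) * powProfile p ε (k + 2) s) := by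
  have hnear : ∀ᶠ t in 𝓝 s, 0 < t + ε :=
    (by fun_prop : ContinuousAt (· + ε) s).eventually_const_lt hs
  have hfirst : deriv (powProfile p ε k) =ᶠ[𝓝 s] fun t => (p - k + 1) * powProfile p ε (k + 1) t :=
    hnear.mono fun t ht => (hasDerivAt_powProfile ht).deriv
  rw [hfirst.deriv_eq, ((hasDerivAt_powProfile hs).const_mul _).deriv]
  ring_nf

theorem deriv_add_mul_deriv_deriv_add_rpow (hs : 0 < s + ε) :
    deriv (fun t => (t + ε) ^ p) s + s * deriv (deriv fun t => (t + ε) ^ p) s =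
      p * powProfile p ε 2 s := by
  have hsplit : (s + ε) ^ (p - 1) = (s + ε) ^ (p - 2) * (s + ε) := by
    rw [← rpow_add_one hs.ne']; ring_nf
  rw [(hasDerivAt_add_rpow hs).deriv, deriv_deriv_add_rpow hs, powProfile, hsplit]
  ring

theorem powProfile_two_discriminant (hp : 1 ≤ p) (hε : 0 < ε) (hs : 0 ≤ s) :
    s * deriv (powProfile p ε 2) s ^ 2 ≤ powProfile p ε 2 s *
      (deriv (powProfile p ε 2) s + s * deriv (deriv (powProfile p ε 2)) s) := by
  have hsε : 0 < s + ε := by positivity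
  set X := (s + ε) ^ (p - 4) with hX
  have hX₃ : (s + ε) ^ (p - 3) = X * (s + ε) := by rw [hX, ← rpow_add_one hsε.ne']; ring_nf
  have hX₂ : (s + ε) ^ (p - 2) = X * (s + ε) ^ 2 := by
    rw [sq, ← mul_assoc, ← hX₃, ← rpow_add_one hsε.ne']; ring_nf
  obtain ⟨d, hd, rfl⟩ : ∃ d, 0 ≤ d ∧ p = 1 + d := ⟨p - 1, by linarith, by ring⟩
  have hgap : 0 ≤ d * X ^ 2 * (s + ε) ^ 2 *
      (2 * (1 + d) * ε ^ 2 * s + (1 + d) * d * ε * s ^ 2 + 2 * ε ^ 3) := by positivity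
  rw [(hasDerivAt_powProfile hsε).deriv, deriv_deriv_powProfile hsε]
  norm_num only [powProfile]
  rw [← hX, hX₂, hX₃, ← sub_nonneg]
  refine hgap.trans_eq ?_
  ring

variable {f : ℂ → ℂ} {z : ℂ}

theorem laplacian_norm_sq_add_rpow (hf : AnalyticAt ℂ f z) (hε : 0 < ε) :
    Δ (fun w => (‖f w‖ ^ 2 + ε) ^ p) z =
      4 * p * (‖deriv f z‖ ^ 2 * powProfile p ε 2 (‖f z‖ ^ 2)) := by
  have hpos : 0 < ‖f z‖ ^ 2 + ε := by positivity
  have hΔ := laplacian_norm_sq_mul_comp_norm_sq hf (analyticAt_const (v := 1))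
    (contDiffAt_add_rpow (p := p) hpos)
  simp only [norm_one, one_pow, one_mul, deriv_const, norm_zero, zero_mul, inner_zero_right,
    mul_zero, zero_add, ne_eq, OfNat.ofNat_ne_zero, not_false_eq_true, zero_pow] at hΔ
  rw [hΔ, deriv_add_mul_deriv_deriv_add_rpow hpos]
  ring

theorem laplacian_norm_deriv_sq_mul_powProfile_nonneg (hf : AnalyticAt ℂ f z) (hp : 1 ≤ p)
    (hε : 0 < ε) : 0 ≤ Δ (fun w => ‖deriv f w‖ ^ 2 * powProfile p ε 2 (‖f w‖ ^ 2)) z := by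
  have hpos : 0 < ‖f z‖ ^ 2 + ε := by positivity
  refine laplacian_norm_sq_mul_comp_norm_sq_nonneg hf hf.deriv (contDiffAt_powProfile hpos) ?_
    (powProfile_two_discriminant hp hε (sq_nonneg _))
  have : 0 < p := by linarith
  norm_num only [powProfile]
  positivity

variable {c : ℂ} {R : ℝ}

theorem convexOn_circleAverage_norm_sq_add_rpow (hf : DifferentiableOn ℂ f (ball c R))
    (hR : 0 ≤ R) (hp : 1 ≤ p) (hε : 0 < ε) :
    ConvexOn ℝ (Ico 0 (R ^ 2)) fun s => circleAverage (fun z => (‖f z‖ ^ 2 + ε) ^ p) c √s := by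
  have hanalytic {z : ℂ} (hz : z ∈ ball c R) : AnalyticAt ℂ f z :=
    hf.analyticAt (isOpen_ball.mem_nhds hz)
  set v : ℂ → ℝ := fun w => ‖deriv f w‖ ^ 2 * powProfile p ε 2 (‖f w‖ ^ 2)
  have hpos (z : ℂ) : 0 < ‖f z‖ ^ 2 + ε := by positivity
  have hmono : MonotoneOn (circleAverage v c) (Ico 0 R) :=
    monotoneOn_circleAverage_of_laplacian_nonneg
      (fun z hz => (contDiffAt_norm_sq_mul_comp_norm_sq (hanalytic hz) (hanalytic hz).deriv
        (contDiffAt_powProfile (hpos z))).contDiffWithinAt)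
      fun z hz => laplacian_norm_deriv_sq_mul_powProfile_nonneg (hanalytic hz) hp hε
  have hu : ContDiffOn ℝ 2 (fun z => (‖f z‖ ^ 2 + ε) ^ p) (ball c R) := fun z hz =>
    ((contDiffAt_add_rpow (hpos z)).comp z
      (((hanalytic hz).contDiffAt.restrict_scalars ℝ).norm_sq ℂ)).contDiffWithinAt
  have hΔ : EqOn (circleAverage (Δ fun z => (‖f z‖ ^ 2 + ε) ^ p) c)
      ((4 * p) • circleAverage v c) (Ico 0 R) := fun ρ hρ => by
    rw [Pi.smul_apply, ← circleAverage_smul]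
    refine circleAverage_congr_sphere fun z hz => ?_
    rw [abs_of_nonneg hρ.1] at hz
    exact laplacian_norm_sq_add_rpow (hanalytic (sphere_subset_ball hρ.2 hz)) hε
  refine convexOn_circleAverage_sqrt hu hR fun ρ hρ σ hσ hρσ => ?_
  rw [hΔ hρ, hΔ hσ]
  exact smul_le_smul_of_nonneg_left (hmono hρ hσ hρσ) (by linarith : 0 ≤ 4 * p)

theorem convexOn_of_tendsto {ι E : Type*} [AddCommGroup E] [Module ℝ E] {l : Filter ι} [l.NeBot]
    {F : ι → E → ℝ} {g : E → ℝ} {S : Set E} (hF : ∀ᶠ i in l, ConvexOn ℝ S (F i))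
    (hS : Convex ℝ S) (hlim : ∀ x ∈ S, Filter.Tendsto (F · x) l (𝓝 (g x))) : ConvexOn ℝ S g := by
  refine ⟨hS, fun x hx y hy a b ha hb hab => ?_⟩
  refine le_of_tendsto_of_tendsto (hlim _ (hS hx hy ha hb hab))
    (((hlim x hx).const_mul a).add ((hlim y hy).const_mul b)) ?_
  exact hF.mono fun i hi => hi.2 hx hy ha hb hab

theorem tendsto_circleAverage_norm_sq_add_rpow {ρ : ℝ} (hf : ContinuousOn f (sphere c |ρ|))
    (hp : 0 ≤ p) :
    Filter.Tendsto (fun ε => circleAverage (fun z => (‖f z‖ ^ 2 + ε) ^ p) c ρ) (𝓝 0)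
      (𝓝 (circleAverage (fun z => ‖f z‖ ^ (2 * p)) c ρ)) := by
  have hcircle : Continuous fun θ => f (circleMap c ρ θ) :=
    hf.comp_continuous (by fun_prop) (circleMap_mem_sphere' c ρ)
  have hcont : Continuous fun ε : ℝ => circleAverage (fun z => (‖f z‖ ^ 2 + ε) ^ p) c ρ := by
    simp only [circleAverage_def]
    have hjoint : Continuous (Function.uncurry fun ε θ : ℝ =>
        (‖f (circleMap c ρ θ)‖ ^ 2 + ε) ^ p) :=
      (((hcircle.comp continuous_snd).norm.pow 2).add continuous_fst).rpow_const fun _ => .inr hp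
    exact (intervalIntegral.continuous_parametric_intervalIntegral_of_continuous'
      (μ := volume) hjoint 0 (2 * π)).const_smul (2 * π)⁻¹
  refine hcont.tendsto' _ _ ?_
  congr 1 with z
  rw [add_zero, rpow_mul (norm_nonneg _), rpow_two]

theorem convexOn_circleAverage_norm_rpow {q : ℝ} (hf : DifferentiableOn ℂ f (ball c R))
    (hR : 0 ≤ R) (hq : 2 ≤ q) :
    ConvexOn ℝ (Ico 0 (R ^ 2)) fun s => circleAverage (fun z => ‖f z‖ ^ q) c √s := by
  refine convexOn_of_tendsto (l := 𝓝[>] 0)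
    (F := fun ε s => circleAverage (fun z => (‖f z‖ ^ 2 + ε) ^ (q / 2)) c √s)
    (eventually_mem_nhdsWithin.mono fun ε hε =>
      convexOn_circleAverage_norm_sq_add_rpow hf hR (by linarith) hε)
    (convex_Ico _ _) fun s hs => ?_
  have hcircle : sphere c |√s| ⊆ ball c R := by
    rw [abs_of_nonneg (sqrt_nonneg s)]
    exact sphere_subset_ball (sqrt_mem_Ico hR hs).2
  have hlim := tendsto_circleAverage_norm_sq_add_rpow (p := q / 2)
    (hf.continuousOn.mono hcircle) (by linarith)
  rw [mul_div_cancel₀ q two_ne_zero] at hlim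
  exact hlim.mono_left nhdsWithin_le_nhds

end RegularisedPower

section Beta
open ProbabilityTheory Set
open scoped ENNReal

variable {a b c : ℝ}

theorem beta_add_mul_beta (hab : 0 < a + b) (hbc : 0 < b + c) :
    beta (a + b) c * beta a b = beta a (b + c) * beta b c := by
  have hΓab := (Real.Gamma_pos_of_pos hab).ne'
  have hΓbc := (Real.Gamma_pos_of_pos hbc).ne'
  simp only [beta, ← add_assoc]
  field_simp

theorem betaPDF_of_mem_Ioo {x : ℝ} (hx : x ∈ Ioo 0 1) :
    betaPDF a b x = ENNReal.ofReal (1 / beta a b * x ^ (a - 1) * (1 - x) ^ (b - 1)) :=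
  betaPDF_of_pos_lt_one hx.1 hx.2

theorem betaPDF_of_notMem_Ioo {x : ℝ} (hx : x ∉ Ioo 0 1) : betaPDF a b x = 0 := by
  rw [mem_Ioo] at hx
  rw [betaPDF_eq, if_neg hx, ENNReal.ofReal_zero]

theorem measurable_betaPDF (a b : ℝ) : Measurable (betaPDF a b) :=
  (measurable_betaPDFReal a b).ennreal_ofReal

theorem ae_betaMeasure_mem_Ioo (a b : ℝ) : ∀ᵐ x ∂betaMeasure a b, x ∈ Ioo (0 : ℝ) 1 := by
  rw [betaMeasure, ae_withDensity_iff (measurable_betaPDF a b)]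
  exact .of_forall fun x hx => not_imp_comm.1 betaPDF_of_notMem_Ioo hx

theorem lintegral_betaMeasure (a b : ℝ) (g : ℝ → ℝ≥0∞) :
    ∫⁻ x, g x ∂betaMeasure a b = ∫⁻ x, betaPDF a b x * g x :=
  lintegral_withDensity_eq_lintegral_mul_non_measurable _ (measurable_betaPDF a b)
    (.of_forall fun _ => ENNReal.ofReal_lt_top) g

theorem lintegral_betaMeasure_eq_setLIntegral (a b : ℝ) (g : ℝ → ℝ≥0∞) :
    ∫⁻ x, g x ∂betaMeasure a b = ∫⁻ x in Ioo 0 1, betaPDF a b x * g x := by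
  have hsupp : Function.support (fun x => betaPDF a b x * g x) ⊆ Ioo 0 1 := fun x hx =>
    not_imp_comm.1 betaPDF_of_notMem_Ioo (left_ne_zero_of_mul hx)
  rw [lintegral_betaMeasure, ← lintegral_indicator measurableSet_Ioo, indicator_eq_self.2 hsupp]

theorem lintegral_abs_mul_comp_mul_left {k : ℝ} (hk : k ≠ 0) {g : ℝ → ℝ≥0∞} (hg : Measurable g) :
    ∫⁻ x, ENNReal.ofReal |k| * g (k * x) = ∫⁻ x, g x := by
  rw [lintegral_const_mul _ (by fun_prop), ← lintegral_map hg (measurable_const_mul k),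
    ← smul_eq_mul, ← lintegral_smul_measure, Real.smul_map_volume_mul_left hk]

theorem betaPDF_mul_betaPDF_of_lt (ha : 0 < a) (hb : 0 < b) (hc : 0 < c) {y z : ℝ} (hy : 0 < y)
    (hyz : y < z) (hz : z < 1) :
    betaPDF (a + b) c z * (ENNReal.ofReal |z⁻¹| * betaPDF a b (z⁻¹ * y)) =
      betaPDF a (b + c) y *
        (ENNReal.ofReal |(1 - y)⁻¹| * betaPDF b c ((1 - y)⁻¹ * (z - y))) := by
  have hz0 : 0 < z := hy.trans hyz
  have hy1 : 0 < 1 - y := by linarith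
  have hz1 : 0 < 1 - z := by linarith
  have hzy : 0 < z - y := by linarith
  have hquot : z⁻¹ * y ∈ Ioo 0 1 := ⟨by positivity, by rwa [inv_mul_lt_one₀ hz0]⟩
  have hquot' : (1 - y)⁻¹ * (z - y) ∈ Ioo 0 1 :=
    ⟨by positivity, by rw [inv_mul_lt_one₀ hy1]; linarith⟩
  have hβ₁ := beta_pos (add_pos ha hb) hc
  have hβ₂ := beta_pos ha hb
  have hβ₃ := beta_pos ha (add_pos hb hc)
  have hβ₄ := beta_pos hb hc
  have hcompl : 1 - z⁻¹ * y = z⁻¹ * (z - y) := by field_simp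
  have hcompl' : 1 - (1 - y)⁻¹ * (z - y) = (1 - y)⁻¹ * (1 - z) := by field_simp; ring
  rw [betaPDF_of_mem_Ioo ⟨hz0, hz⟩, betaPDF_of_mem_Ioo hquot, betaPDF_of_mem_Ioo hquot',
    betaPDF_of_mem_Ioo ⟨hy, hyz.trans hz⟩, hcompl, hcompl', abs_of_pos (by positivity),
    abs_of_pos (by positivity)]
  repeat rw [← ENNReal.ofReal_mul (by positivity)]
  congr 1
  simp only [Real.mul_rpow, Real.inv_rpow, inv_nonneg, hz0.le, hy.le, hy1.le, hz1.le, hzy.le]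
  rw [show a + b - 1 = (a - 1) + (b - 1) + 1 by ring,
    show b + c - 1 = (b - 1) + (c - 1) + 1 by ring]
  simp only [Real.rpow_add hz0, Real.rpow_add hy1, Real.rpow_one]
  field_simp
  exact (beta_add_mul_beta (add_pos ha hb) (add_pos hb hc)).symm

theorem betaPDF_mul_betaPDF (ha : 0 < a) (hb : 0 < b) (hc : 0 < c) (y z : ℝ) :
    betaPDF (a + b) c z * (ENNReal.ofReal |z⁻¹| * betaPDF a b (z⁻¹ * y)) =
      betaPDF a (b + c) y *
        (ENNReal.ofReal |(1 - y)⁻¹| * betaPDF b c ((1 - y)⁻¹ * (z - y))) := by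
  by_cases hsupp : 0 < y ∧ y < z ∧ z < 1
  · exact betaPDF_mul_betaPDF_of_lt ha hb hc hsupp.1 hsupp.2.1 hsupp.2.2
  have hleft : betaPDF (a + b) c z = 0 ∨ betaPDF a b (z⁻¹ * y) = 0 := by
    by_contra! hne
    obtain ⟨hz, hzy⟩ := hne.imp (not_imp_comm.1 betaPDF_of_notMem_Ioo)
      (not_imp_comm.1 betaPDF_of_notMem_Ioo)
    exact hsupp ⟨(mul_pos_iff_of_pos_left (inv_pos.2 hz.1)).1 hzy.1,
      (inv_mul_lt_one₀ hz.1).1 hzy.2, hz.2⟩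
  have hright : betaPDF a (b + c) y = 0 ∨ betaPDF b c ((1 - y)⁻¹ * (z - y)) = 0 := by
    by_contra! hne
    obtain ⟨hy, hzy⟩ := hne.imp (not_imp_comm.1 betaPDF_of_notMem_Ioo)
      (not_imp_comm.1 betaPDF_of_notMem_Ioo)
    have hy1 : 0 < 1 - y := sub_pos.2 hy.2
    have hyz := (mul_pos_iff_of_pos_left (inv_pos.2 hy1)).1 hzy.1
    have hz1 := (inv_mul_lt_one₀ hy1).1 hzy.2
    exact hsupp ⟨hy.1, by linarith, by linarith⟩
  rcases hleft with hl | hl <;> rcases hright with hr | hr <;> simp [hl, hr]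

theorem lintegral_abs_mul_betaPDF_affine (hb : 0 < b) (hc : 0 < c) {k : ℝ} (hk : k ≠ 0) (y : ℝ) :
    ∫⁻ z, ENNReal.ofReal |k| * betaPDF b c (k * (z - y)) = 1 := by
  rw [lintegral_sub_right_eq_self (fun z => ENNReal.ofReal |k| * betaPDF b c (k * z)) y,
    lintegral_abs_mul_comp_mul_left hk (measurable_betaPDF b c), lintegral_betaPDF_eq_one hb hc]

theorem betaMeasure_mconv_betaMeasure (ha : 0 < a) (hb : 0 < b) (hc : 0 < c) :
    betaMeasure a b ∗ₘ betaMeasure (a + b) c = betaMeasure a (b + c) := by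
  have := isProbabilityMeasureBeta ha hb
  have := isProbabilityMeasureBeta (add_pos ha hb) hc
  rw [Measure.mconv_comm]
  refine Measure.ext_of_lintegral _ fun g hg => ?_
  have := measurable_betaPDF a b
  have := measurable_betaPDF b c
  have := measurable_betaPDF (a + b) c
  have := measurable_betaPDF a (b + c)
  have hsubst (z : ℝ) : betaPDF (a + b) c z * ∫⁻ x, betaPDF a b x * g (z * x) =
      ∫⁻ y, betaPDF (a + b) c z * (ENNReal.ofReal |z⁻¹| * betaPDF a b (z⁻¹ * y)) * g y := by
    by_cases hz : z ∈ Ioo (0 : ℝ) 1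
    · rw [← lintegral_abs_mul_comp_mul_left (inv_ne_zero hz.1.ne') (by fun_prop),
        ← lintegral_const_mul _ (by fun_prop)]
      simp only [mul_inv_cancel_left₀ hz.1.ne', mul_assoc]
    · simp [betaPDF_of_notMem_Ioo hz]
  have hmass (y : ℝ) : betaPDF a (b + c) y *
      ∫⁻ z, ENNReal.ofReal |(1 - y)⁻¹| * betaPDF b c ((1 - y)⁻¹ * (z - y)) =
        betaPDF a (b + c) y := by
    by_cases hy : y ∈ Ioo (0 : ℝ) 1
    · rw [lintegral_abs_mul_betaPDF_affine hb hc (inv_ne_zero (sub_pos.2 hy.2).ne'), mul_one]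
    · simp [betaPDF_of_notMem_Ioo hy]
  calc ∫⁻ x, g x ∂(betaMeasure (a + b) c ∗ₘ betaMeasure a b)
    _ = ∫⁻ z, betaPDF (a + b) c z * ∫⁻ x, betaPDF a b x * g (z * x) := by
      simp only [Measure.lintegral_mconv hg, lintegral_betaMeasure]
    _ = ∫⁻ y, ∫⁻ z,
          betaPDF (a + b) c z * (ENNReal.ofReal |z⁻¹| * betaPDF a b (z⁻¹ * y)) * g y := by
      rw [lintegral_congr hsubst, lintegral_lintegral_swap (by fun_prop)]
    _ = ∫⁻ y, betaPDF a (b + c) y * g y := by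
      congr with y
      simp only [betaPDF_mul_betaPDF ha hb hc]
      rw [lintegral_mul_const _ (by fun_prop), lintegral_const_mul _ (by fun_prop), hmass]
    _ = ∫⁻ x, g x ∂betaMeasure a (b + c) := (lintegral_betaMeasure _ _ g).symm

theorem mul_betaPDF (ha : 0 < a) (hb : 0 < b) (x : ℝ) :
    ENNReal.ofReal x * betaPDF a b x = ENNReal.ofReal (a / (a + b)) * betaPDF (a + 1) b x := by
  by_cases hx : x ∈ Ioo (0 : ℝ) 1
  · have hx0 := hx.1
    have := beta_pos ha hb
    have hconst : beta (a + 1) b = a / (a + b) * beta a b := by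
      simp only [beta, add_right_comm a 1 b, Real.Gamma_add_one ha.ne',
        Real.Gamma_add_one (add_pos ha hb).ne']
      field_simp
    rw [betaPDF_of_mem_Ioo hx, betaPDF_of_mem_Ioo hx, ← ENNReal.ofReal_mul hx.1.le,
      ← ENNReal.ofReal_mul (by positivity), hconst, add_sub_cancel_right,
      Real.rpow_sub_one hx.1.ne']
    field_simp
  · simp [betaPDF_of_notMem_Ioo hx]

theorem integral_id_betaMeasure (ha : 0 < a) (hb : 0 < b) :
    ∫ x, x ∂betaMeasure a b = a / (a + b) := by
  have hmean : ∫⁻ x, ENNReal.ofReal x ∂betaMeasure a b = ENNReal.ofReal (a / (a + b)) := by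
    simp only [lintegral_betaMeasure, mul_comm (betaPDF a b _), mul_betaPDF ha hb]
    rw [lintegral_const_mul _ (measurable_betaPDF _ _), lintegral_betaPDF_eq_one (by linarith) hb,
      mul_one]
  rw [integral_eq_lintegral_of_nonneg_ae ((ae_betaMeasure_mem_Ioo a b).mono fun x hx => hx.1.le)
    (by fun_prop), hmean, ENNReal.toReal_ofReal (by positivity)]

end Beta

section Jensen
open ProbabilityTheory Set
open scoped ENNReal

theorem measurable_indicator_of_continuousOn {X Y : Type*} [TopologicalSpace X] [MeasurableSpace X]
    [OpensMeasurableSpace X] [TopologicalSpace Y] [MeasurableSpace Y] [BorelSpace Y] [Zero Y]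
    {g : X → Y} {s : Set X} (hg : ContinuousOn g s) (hs : MeasurableSet s) :
    Measurable (s.indicator g) := by
  classical
  rw [← piecewise_eq_indicator]
  exact hg.measurable_piecewise continuousOn_const hs

variable {μ ν : Measure ℝ} {Φ : ℝ → ℝ}

theorem ofReal_map_mul_integral_le_lintegral [IsProbabilityMeasure μ]
    (hμ : ∀ᵐ t ∂μ, t ∈ Icc (0 : ℝ) 1) (hΦ : ConvexOn ℝ (Ico 0 1) Φ)
    (hΦc : ContinuousOn Φ (Ico 0 1)) (hΦ0 : ∀ s ∈ Ico (0 : ℝ) 1, 0 ≤ Φ s) {s : ℝ}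
    (hs : s ∈ Ico (0 : ℝ) 1) :
    ENNReal.ofReal (Φ (s * ∫ t, t ∂μ)) ≤ ∫⁻ t, ENNReal.ofReal (Φ (s * t)) ∂μ := by
  have hsub : Icc 0 s ⊆ Ico 0 1 := Icc_subset_Ico_right hs.2
  have hmaps : MapsTo (s * ·) (Icc 0 1) (Icc 0 s) := fun t ht =>
    ⟨mul_nonneg hs.1 ht.1, mul_le_of_le_one_right hs.1 ht.2⟩
  have hint {g : ℝ → ℝ} (hg : ContinuousOn g (Icc 0 1)) : Integrable g μ := by
    rw [← Measure.restrict_eq_self_of_ae_mem hμ]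
    exact hg.integrableOn_compact isCompact_Icc
  have hΦint : Integrable (fun t => Φ (s * t)) μ :=
    hint ((hΦc.mono hsub).comp (by fun_prop) hmaps)
  have hjensen : Φ (∫ t, s * t ∂μ) ≤ ∫ t, Φ (s * t) ∂μ :=
    (hΦ.subset hsub (convex_Icc 0 s)).map_integral_le (hΦc.mono hsub) isClosed_Icc
      (hμ.mono hmaps) (hint (by fun_prop)) hΦint
  rw [← integral_const_mul, ← ofReal_integral_eq_lintegral_ofReal hΦint
    (hμ.mono fun t ht => hΦ0 _ (hsub (hmaps ht)))]
  exact ENNReal.ofReal_le_ofReal hjensen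

theorem lintegral_map_mul_integral_le_lintegral_mconv [IsProbabilityMeasure μ] [SFinite ν]
    (hμ : ∀ᵐ t ∂μ, t ∈ Icc (0 : ℝ) 1) (hν : ∀ᵐ s ∂ν, s ∈ Ico (0 : ℝ) 1)
    (hΦ : ConvexOn ℝ (Ico 0 1) Φ) (hΦc : ContinuousOn Φ (Ico 0 1))
    (hΦ0 : ∀ s ∈ Ico (0 : ℝ) 1, 0 ≤ Φ s) :
    ∫⁻ s, ENNReal.ofReal (Φ (s * ∫ t, t ∂μ)) ∂ν ≤ ∫⁻ x, ENNReal.ofReal (Φ x) ∂(ν ∗ₘ μ) := by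
  let Ψ : ℝ → ℝ≥0∞ := (Ico 0 1).indicator fun x => ENNReal.ofReal (Φ x)
  have hΨ : Measurable Ψ := measurable_indicator_of_continuousOn
    (ENNReal.continuous_ofReal.comp_continuousOn hΦc) measurableSet_Ico
  calc ∫⁻ s, ENNReal.ofReal (Φ (s * ∫ t, t ∂μ)) ∂ν
    _ ≤ ∫⁻ s, ∫⁻ t, Ψ (s * t) ∂μ ∂ν := by
      refine lintegral_mono_ae (hν.mono fun s hs => ?_)
      refine (ofReal_map_mul_integral_le_lintegral hμ hΦ hΦc hΦ0 hs).trans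
        (lintegral_mono_ae (hμ.mono fun t ht => ?_))
      have hst : s * t ∈ Ico 0 1 :=
        ⟨mul_nonneg hs.1 ht.1, (mul_le_of_le_one_right hs.1 ht.2).trans_lt hs.2⟩
      exact (indicator_of_mem hst fun x => ENNReal.ofReal (Φ x)).ge
    _ = ∫⁻ x, Ψ x ∂(ν ∗ₘ μ) := (Measure.lintegral_mconv hΨ).symm
    _ ≤ ∫⁻ x, ENNReal.ofReal (Φ x) ∂(ν ∗ₘ μ) := lintegral_mono (indicator_le_self _ _)

theorem lintegral_map_mul_betaMeasure_le {a b c : ℝ} (ha : 0 < a) (hb : 0 < b) (hc : 0 < c)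
    (hΦ : ConvexOn ℝ (Ico 0 1) Φ) (hΦc : ContinuousOn Φ (Ico 0 1))
    (hΦ0 : ∀ s ∈ Ico (0 : ℝ) 1, 0 ≤ Φ s) :
    ∫⁻ s, ENNReal.ofReal (Φ (s * ((a + b) / (a + b + c)))) ∂betaMeasure a b ≤
      ∫⁻ s, ENNReal.ofReal (Φ s) ∂betaMeasure a (b + c) := by
  have := isProbabilityMeasureBeta ha hb
  have := isProbabilityMeasureBeta (add_pos ha hb) hc
  rw [← integral_id_betaMeasure (add_pos ha hb) hc, ← betaMeasure_mconv_betaMeasure ha hb hc]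
  exact lintegral_map_mul_integral_le_lintegral_mconv
    ((ae_betaMeasure_mem_Ioo _ _).mono fun _ ht => Ioo_subset_Icc_self ht)
    ((ae_betaMeasure_mem_Ioo _ _).mono fun _ hs => Ioo_subset_Ico_self hs) hΦ hΦc hΦ0

end Jensen

section BergmanMeasure
open Real Set ProbabilityTheory
open scoped ENNReal

theorem lintegral_eq_lintegral_circleMap {F : ℂ → ℝ≥0∞} (hF : Measurable F) :
    ∫⁻ z, F z =
      ∫⁻ ρ in Ioi 0, ENNReal.ofReal ρ * ∫⁻ θ in Ioo (-π) π, F (circleMap 0 ρ θ) := by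
  have hcircle : Measurable fun p : ℝ × ℝ => F (circleMap 0 p.1 p.2) :=
    hF.comp (by simp only [circleMap]; fun_prop)
  have hpolar (p : ℝ × ℝ) : Complex.polarCoord.symm p = circleMap 0 p.1 p.2 := by
    simp [Complex.polarCoord_symm_apply, circleMap, Complex.exp_mul_I]
  rw [← Complex.lintegral_comp_polarCoord_symm, polarCoord_target, Measure.volume_eq_prod,
    ← Measure.prod_restrict]
  simp only [hpolar, smul_eq_mul]
  rw [lintegral_prod _ (by fun_prop)]
  exact lintegral_congr fun ρ =>
    lintegral_const_mul (ENNReal.ofReal ρ) (hcircle.comp (measurable_prodMk_left (x := ρ)))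

theorem lintegral_circleMap_eq_ofReal_circleAverage {u : ℂ → ℝ} {c : ℂ} {ρ : ℝ}
    (hu : CircleIntegrable u c ρ) (hu0 : ∀ z ∈ sphere c |ρ|, 0 ≤ u z) :
    ∫⁻ θ in Ioo (-π) π, ENNReal.ofReal (u (circleMap c ρ θ)) =
      ENNReal.ofReal (2 * π * circleAverage u c ρ) := by
  have hper : Function.Periodic (fun θ => u (circleMap c ρ θ)) (2 * π) :=
    (periodic_circleMap c ρ).comp u
  have hπ : -π + 2 * π = π := by ring
  have hle : -π ≤ π := by linarith [pi_pos]
  have hint : IntervalIntegrable (fun θ => u (circleMap c ρ θ)) volume (-π) π :=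
    hper.intervalIntegrable₀ two_pi_pos.ne' hu _ _
  have havg : 2 * π * circleAverage u c ρ = ∫ θ in Ioo (-π) π, u (circleMap c ρ θ) := by
    rw [← integral_Ioc_eq_integral_Ioo, ← intervalIntegral.integral_of_le hle]
    have hshift := hper.intervalIntegral_add_eq 0 (-π)
    rw [zero_add, hπ] at hshift
    rw [circleAverage_def, smul_eq_mul, mul_inv_cancel_left₀ two_pi_pos.ne', hshift]
  rw [havg, ofReal_integral_eq_lintegral_ofReal
    ((intervalIntegrable_iff_integrableOn_Ioo_of_le hle).1 hint)
    (.of_forall fun θ => hu0 _ (circleMap_mem_sphere' c ρ θ))]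

theorem lintegral_ball_eq_lintegral_circleAverage {u : ℂ → ℝ} {R : ℝ} {w : ℝ → ℝ≥0∞}
    (hu : ContinuousOn u (ball 0 R)) (hu0 : ∀ z ∈ ball (0 : ℂ) R, 0 ≤ u z) (hw : Measurable w) :
    ∫⁻ z in ball 0 R, w ‖z‖ * ENNReal.ofReal (u z) =
      ∫⁻ ρ in Ioo 0 R, ENNReal.ofReal ρ *
        (w ρ * ENNReal.ofReal (2 * π * circleAverage u 0 ρ)) := by
  let v : ℂ → ℝ≥0∞ := (ball 0 R).indicator fun z => ENNReal.ofReal (u z)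
  have hv : Measurable v := measurable_indicator_of_continuousOn
    (ENNReal.continuous_ofReal.comp_continuousOn hu) measurableSet_ball
  have hcircle {ρ : ℝ} (hρ : 0 < ρ) :
      ENNReal.ofReal ρ * ∫⁻ θ in Ioo (-π) π, w ‖circleMap 0 ρ θ‖ * v (circleMap 0 ρ θ) =
        (Iio R).indicator (fun ρ => ENNReal.ofReal ρ *
          (w ρ * ENNReal.ofReal (2 * π * circleAverage u 0 ρ))) ρ := by
    have hvcircle : Measurable fun θ => v (circleMap 0 ρ θ) :=
      hv.comp (continuous_circleMap 0 ρ).measurable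
    simp only [norm_circleMap_zero, abs_of_pos hρ]
    rw [lintegral_const_mul _ hvcircle]
    by_cases hρR : ρ < R
    · have hsphere : sphere (0 : ℂ) |ρ| ⊆ ball 0 R := sphere_subset_ball (by rwa [abs_of_pos hρ])
      rw [indicator_of_mem (mem_Iio.2 hρR), ← lintegral_circleMap_eq_ofReal_circleAverage
        (hu.mono hsphere).circleIntegrable' fun z hz => hu0 z (hsphere hz)]
      simp only [v, indicator_of_mem (hsphere (circleMap_mem_sphere' 0 ρ _))]
    · have hout (θ : ℝ) : circleMap 0 ρ θ ∉ ball 0 R := by simpa [abs_of_pos hρ] using hρR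
      simp [v, hout, hρR]
  have hind : ∫⁻ z in ball 0 R, w ‖z‖ * ENNReal.ofReal (u z) = ∫⁻ z, w ‖z‖ * v z := by
    rw [← lintegral_indicator measurableSet_ball]
    simp only [v, indicator_mul_right]
  rw [hind, lintegral_eq_lintegral_circleMap (by fun_prop),
    setLIntegral_congr_fun measurableSet_Ioi fun ρ hρ => hcircle hρ,
    setLIntegral_indicator measurableSet_Iio, inter_comm, Ioi_inter_Iio]

theorem lintegral_Ioo_eq_lintegral_comp_sq (g : ℝ → ℝ≥0∞) :
    ∫⁻ s in Ioo 0 1, g s = ∫⁻ ρ in Ioo 0 1, ENNReal.ofReal (2 * ρ) * g (ρ ^ 2) := by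
  have himage : (fun ρ : ℝ => ρ ^ 2) '' Ioo 0 1 = Ioo 0 1 := by
    ext s
    constructor
    · rintro ⟨ρ, hρ, rfl⟩
      exact ⟨pow_pos hρ.1 2, pow_lt_one₀ hρ.1.le hρ.2 two_ne_zero⟩
    · intro hs
      have hsqrt : √s < 1 := by simpa using sqrt_lt_sqrt hs.1.le hs.2
      exact ⟨√s, ⟨sqrt_pos.2 hs.1, hsqrt⟩, sq_sqrt hs.1.le⟩
  have hinj : InjOn (fun ρ : ℝ => ρ ^ 2) (Ioo 0 1) :=
    (pow_left_strictMonoOn₀ two_ne_zero).injOn.mono fun ρ hρ => hρ.1.le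
  have hderiv (ρ : ℝ) (_ : ρ ∈ Ioo (0 : ℝ) 1) :
      HasDerivWithinAt (fun ρ : ℝ => ρ ^ 2) (2 * ρ) (Ioo 0 1) ρ := by
    simpa using (hasDerivAt_pow 2 ρ).hasDerivWithinAt
  conv_lhs => rw [← himage]
  rw [lintegral_image_eq_lintegral_abs_deriv_mul measurableSet_Ioo hderiv hinj]
  refine setLIntegral_congr_fun measurableSet_Ioo fun ρ hρ => ?_
  rw [abs_of_pos (mul_pos two_pos hρ.1)]

/-- The measure `dA_γ` on the unit disk, extended by zero to the plane; for `γ > 1` it is a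
probability measure, the one defining the weighted Bergman spaces. -/
noncomputable def bergmanMeasure (γ : ℝ) : Measure ℂ :=
  (volume.restrict (ball 0 1)).withDensity fun z =>
    ENNReal.ofReal ((γ - 1) / π * (1 - ‖z‖ ^ 2) ^ (γ - 2))

variable {γ : ℝ} {u : ℂ → ℝ}

theorem ae_bergmanMeasure_mem_ball (γ : ℝ) : ∀ᵐ z ∂bergmanMeasure γ, z ∈ ball (0 : ℂ) 1 :=
  (withDensity_absolutelyContinuous _ _).ae_le (ae_restrict_mem measurableSet_ball)

theorem betaPDF_one_sub_one (hγ : 1 < γ) {s : ℝ} (hs : s ∈ Ioo 0 1) :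
    betaPDF 1 (γ - 1) s = ENNReal.ofReal ((γ - 1) * (1 - s) ^ (γ - 2)) := by
  have hΓ := (Gamma_pos_of_pos (sub_pos.2 hγ)).ne'
  have hbeta : 1 / beta 1 (γ - 1) = γ - 1 := by
    rw [beta, add_comm, Gamma_add_one (sub_pos.2 hγ).ne', Gamma_one]
    field_simp
  rw [betaPDF_of_mem_Ioo hs, hbeta, sub_self, rpow_zero, mul_one, sub_sub, one_add_one_eq_two]

theorem lintegral_bergmanMeasure (hγ : 1 < γ) (hu : ContinuousOn u (ball 0 1))
    (hu0 : ∀ z ∈ ball (0 : ℂ) 1, 0 ≤ u z) :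
    ∫⁻ z, ENNReal.ofReal (u z) ∂bergmanMeasure γ =
      ∫⁻ s, ENNReal.ofReal (circleAverage u 0 √s) ∂betaMeasure 1 (γ - 1) := by
  have hradial : ∫⁻ z, ENNReal.ofReal (u z) ∂bergmanMeasure γ =
      ∫⁻ ρ in Ioo 0 1, ENNReal.ofReal ρ * (ENNReal.ofReal ((γ - 1) / π * (1 - ρ ^ 2) ^ (γ - 2)) *
        ENNReal.ofReal (2 * π * circleAverage u 0 ρ)) := by
    rw [← lintegral_ball_eq_lintegral_circleAverage hu hu0 (by fun_prop), bergmanMeasure,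
      lintegral_withDensity_eq_lintegral_mul_non_measurable _ (by fun_prop)
        (.of_forall fun _ => ENNReal.ofReal_lt_top)]
    rfl
  rw [hradial, lintegral_betaMeasure_eq_setLIntegral, lintegral_Ioo_eq_lintegral_comp_sq fun s =>
    betaPDF 1 (γ - 1) s * ENNReal.ofReal (circleAverage u 0 √s)]
  refine setLIntegral_congr_fun measurableSet_Ioo fun ρ hρ => ?_
  have hρ0 := hρ.1
  have hρ2 : ρ ^ 2 ∈ Ioo 0 1 := ⟨pow_pos hρ.1 2, pow_lt_one₀ hρ.1.le hρ.2 two_ne_zero⟩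
  have hγ0 : 0 < γ - 1 := sub_pos.2 hγ
  have hweight : 0 < 1 - ρ ^ 2 := sub_pos.2 hρ2.2
  rw [betaPDF_one_sub_one hγ hρ2, sqrt_sq hρ.1.le]
  repeat rw [← ENNReal.ofReal_mul (by positivity)]
  congr 1
  field_simp

theorem circleAverage_comp_mul_left (u : ℂ → ℝ) (r ρ : ℝ) :
    circleAverage (fun z => u (r * z)) 0 ρ = circleAverage u 0 (r * ρ) := by
  simp only [circleAverage_def, circleMap, zero_add, Complex.ofReal_mul, mul_assoc]

theorem mapsTo_sqrt_mul_ball {t : ℝ} (ht : t ≤ 1) :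
    MapsTo (fun z : ℂ => √t * z) (ball 0 1) (ball 0 1) := by
  intro z hz
  rw [mem_ball_zero_iff] at hz ⊢
  rw [norm_mul, Complex.norm_of_nonneg (sqrt_nonneg t)]
  exact (mul_le_of_le_one_left (norm_nonneg z) (sqrt_le_one.2 ht)).trans_lt hz

theorem aestronglyMeasurable_bergmanMeasure (hu : ContinuousOn u (ball 0 1)) (γ : ℝ) :
    AEStronglyMeasurable u (bergmanMeasure γ) :=
  (hu.aestronglyMeasurable measurableSet_ball).mono_ac (withDensity_absolutelyContinuous _ _)

theorem ae_toReal_bergmanWeight (hγ : 1 ≤ γ) :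
    ∀ᵐ z : ℂ ∂volume.restrict (ball 0 1),
      (ENNReal.ofReal ((γ - 1) / π * (1 - ‖z‖ ^ 2) ^ (γ - 2))).toReal =
        (γ - 1) / π * (1 - ‖z‖ ^ 2) ^ (γ - 2) := by
  refine (ae_restrict_mem measurableSet_ball).mono fun z hz => ENNReal.toReal_ofReal ?_
  have hz1 : ‖z‖ ^ 2 ≤ 1 := pow_le_one₀ (norm_nonneg z) (mem_ball_zero_iff.1 hz).le
  exact mul_nonneg (div_nonneg (sub_nonneg.2 hγ) pi_pos.le) (rpow_nonneg (sub_nonneg.2 hz1) _)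

theorem integrable_bergmanMeasure_iff (hγ : 1 ≤ γ) :
    Integrable u (bergmanMeasure γ) ↔
      IntegrableOn (fun z => u z * ((γ - 1) / π * (1 - ‖z‖ ^ 2) ^ (γ - 2))) (ball 0 1) := by
  rw [bergmanMeasure, integrable_withDensity_iff_integrable_smul' (by fun_prop)
    (.of_forall fun _ => ENNReal.ofReal_lt_top)]
  apply integrable_congr
  filter_upwards [ae_toReal_bergmanWeight hγ] with z hz
  rw [hz, smul_eq_mul, mul_comm]

theorem integral_bergmanMeasure (hγ : 1 ≤ γ) (u : ℂ → ℝ) :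
    ∫ z, u z ∂bergmanMeasure γ =
      (γ - 1) / π * ∫ z in ball 0 1, u z * (1 - ‖z‖ ^ 2) ^ (γ - 2) := by
  rw [bergmanMeasure, integral_withDensity_eq_integral_toReal_smul (by fun_prop)
    (.of_forall fun _ => ENNReal.ofReal_lt_top), ← integral_const_mul]
  apply integral_congr_ae
  filter_upwards [ae_toReal_bergmanWeight hγ] with z hz
  rw [hz, smul_eq_mul, mul_assoc, mul_comm (u z)]

variable {α β : ℝ}

theorem lintegral_comp_mul_bergmanMeasure_le (hα : 1 < α) (hαβ : α < β)
    (hu : ContinuousOn u (ball 0 1)) (hu0 : ∀ z ∈ ball (0 : ℂ) 1, 0 ≤ u z)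
    (hconv : ConvexOn ℝ (Ico 0 1) fun s => circleAverage u 0 √s) :
    ∫⁻ z, ENNReal.ofReal (u (√(α / β) * z)) ∂bergmanMeasure α ≤
      ∫⁻ z, ENNReal.ofReal (u z) ∂bergmanMeasure β := by
  have hr : 0 ≤ α / β := div_nonneg (by linarith) (by linarith)
  have hmaps := mapsTo_sqrt_mul_ball (div_le_one_of_le₀ hαβ.le (by linarith))
  have hdil : ContinuousOn (fun z => u (√(α / β) * z)) (ball 0 1) := hu.comp (by fun_prop) hmaps
  have hΦc : ContinuousOn (fun s => circleAverage u 0 √s) (Ico 0 1) := by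
    simpa using continuousOn_circleAverage_sqrt hu zero_le_one
  have hΦ0 (s : ℝ) (hs : s ∈ Ico (0 : ℝ) 1) : 0 ≤ circleAverage u 0 √s := by
    refine circleAverage_nonneg_of_nonneg fun z hz => hu0 z (sphere_subset_ball ?_ hz)
    rw [abs_of_nonneg (sqrt_nonneg s)]
    simpa using sqrt_lt_sqrt hs.1 hs.2
  calc ∫⁻ z, ENNReal.ofReal (u (√(α / β) * z)) ∂bergmanMeasure α
    _ = ∫⁻ s, ENNReal.ofReal (circleAverage u 0 √(s * (α / β))) ∂betaMeasure 1 (α - 1) := by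
      rw [lintegral_bergmanMeasure hα hdil fun z hz => hu0 _ (hmaps hz)]
      simp only [circleAverage_comp_mul_left, ← sqrt_mul hr, mul_comm (α / β)]
    _ ≤ ∫⁻ s, ENNReal.ofReal (circleAverage u 0 √s) ∂betaMeasure 1 (β - 1) := by
      simpa using lintegral_map_mul_betaMeasure_le one_pos (sub_pos.2 hα) (sub_pos.2 hαβ)
        hconv hΦc hΦ0
    _ = ∫⁻ z, ENNReal.ofReal (u z) ∂bergmanMeasure β :=
      (lintegral_bergmanMeasure (hα.trans hαβ) hu hu0).symm

theorem integral_comp_mul_bergmanMeasure_le (hα : 1 < α) (hαβ : α < β)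
    (hu : ContinuousOn u (ball 0 1)) (hu0 : ∀ z ∈ ball (0 : ℂ) 1, 0 ≤ u z)
    (hconv : ConvexOn ℝ (Ico 0 1) fun s => circleAverage u 0 √s)
    (hint : Integrable u (bergmanMeasure β)) :
    ∫ z, u (√(α / β) * z) ∂bergmanMeasure α ≤ ∫ z, u z ∂bergmanMeasure β := by
  have hmaps := mapsTo_sqrt_mul_ball (div_le_one_of_le₀ hαβ.le (by linarith))
  rw [integral_eq_lintegral_of_nonneg_ae
      ((ae_bergmanMeasure_mem_ball α).mono fun z hz => hu0 _ (hmaps hz))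
      (aestronglyMeasurable_bergmanMeasure (hu.comp (by fun_prop) hmaps) α),
    integral_eq_lintegral_of_nonneg_ae ((ae_bergmanMeasure_mem_ball β).mono hu0) hint.1]
  exact ENNReal.toReal_mono hint.lintegral_lt_top.ne
    (lintegral_comp_mul_bergmanMeasure_le hα hαβ hu hu0 hconv)

end BergmanMeasure

theorem weighted_dilation_inequality_q_ge_two
    (q α β : ℝ) (hq : 2 ≤ q) (hα : 1 < α) (hαβ : α < β)
    (f : ℂ → ℂ) (hf : DifferentiableOn ℂ f (ball (0 : ℂ) 1))
    (hfq : IntegrableOn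
      (fun z => ‖f z‖ ^ q * ((β - 1) / Real.pi * (1 - ‖z‖ ^ 2) ^ (β - 2)))
      (ball (0 : ℂ) 1)) :
    (α - 1) / Real.pi *
        ∫ z in ball (0 : ℂ) 1,
          ‖f ((Real.sqrt (α / β) : ℂ) * z)‖ ^ q * (1 - ‖z‖ ^ 2) ^ (α - 2) ≤
      (β - 1) / Real.pi *
        ∫ z in ball (0 : ℂ) 1, ‖f z‖ ^ q * (1 - ‖z‖ ^ 2) ^ (β - 2) := by
  have hcont : ContinuousOn (fun z => ‖f z‖ ^ q) (ball 0 1) :=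
    hf.continuousOn.norm.rpow_const fun _ _ => .inr (by linarith)
  have hconv : ConvexOn ℝ (Set.Ico 0 1) fun s =>
      Real.circleAverage (fun z => ‖f z‖ ^ q) 0 (Real.sqrt s) := by
    simpa using convexOn_circleAverage_norm_rpow hf zero_le_one hq
  have hint : Integrable (fun z => ‖f z‖ ^ q) (bergmanMeasure β) :=
    (integrable_bergmanMeasure_iff (hα.trans hαβ).le).2 hfq
  rw [← integral_bergmanMeasure hα.le, ← integral_bergmanMeasure (hα.trans hαβ).le]
  exact integral_comp_mul_bergmanMeasure_le hα hαβ hcont (fun z _ => by positivity) hconv hint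
end

section
/- (Hardy–Stein identity.) Let p ≥ 2 and let f be holomorphic on the unit disk 𝔻. Then for 0 < r < 1, (1/2π) ∫₀^{2π} |f(√r e^{iθ})|^p dθ = |f(0)|^p + (p²/2π) ∫₀^{√r} (1/ρ) ( ∫_{|z|<ρ} |f(z)|^{p−2} |f'(z)|² dA(z) ) dρ. -/
open MeasureTheory Metric

/-!
For `p ≥ 2` the function `‖w‖ ^ p` is `C²` on the plane, also at the origin, and its Laplacian is
`p² ‖w‖ ^ (p - 2)`. The Laplacian is conformally covariant, `Δ (g ∘ f) = ‖f'‖² (Δ g) ∘ f` for `f`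
holomorphic, so that `Δ (‖f‖ ^ p) = p² ‖f‖ ^ (p - 2) ‖f'‖²`, including at the zeros of `f`.
For any `C²` function `u` the derivative in `ρ` of its average over the circle of radius `ρ` is
the flux of `∇u` through that circle divided by `2πρ`; the divergence theorem turns the flux into
`∫_{|z - c| < ρ} Δu`, and integrating in `ρ` gives the identity.
-/

open Complex (I)
open Asymptotics Filter InnerProductSpace Topology
open scoped Laplacian Real

section NormRpow

theorem mul_rpow_sub_two_mul_sq {a : ℝ} (ha : 0 ≤ a) (q : ℝ) :
    q * a ^ (q - 2) * a ^ 2 = q * a ^ q := by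
  obtain rfl | hq := eq_or_ne q 0
  · simp
  rw [mul_assoc, ← Real.rpow_natCast, ← Real.rpow_add' ha] <;> simp [hq]

theorem tendsto_norm_rpow_nhds_zero {E : Type*} [SeminormedAddCommGroup E] {q : ℝ} (hq : 0 < q) :
    Tendsto (fun y : E ↦ ‖y‖ ^ q) (𝓝 0) (𝓝 0) := by
  simpa [Real.zero_rpow hq.ne'] using
    (continuous_norm.rpow_const fun _ ↦ .inr hq.le).tendsto (0 : E)

variable {E : Type*} [NormedAddCommGroup E] [InnerProductSpace ℝ E]

theorem hasFDerivAt_norm_rpow_of_ne_zero {x : E} (hx : x ≠ 0) (q : ℝ) :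
    HasFDerivAt (fun y : E ↦ ‖y‖ ^ q) ((q * ‖x‖ ^ (q - 2)) • innerSL ℝ x) x := by
  apply HasStrictFDerivAt.hasFDerivAt
  convert! (hasStrictFDerivAt_norm_sq x).rpow_const (p := q / 2) (by simp [hx]) using 0
  simp_rw [← Real.rpow_natCast_mul (norm_nonneg _), ← Nat.cast_smul_eq_nsmul ℝ, smul_smul]
  ring_nf

theorem hasFDerivAt_norm_rpow_smul_self {q : ℝ} (hq : 0 ≤ q) (x : E) :
    HasFDerivAt (fun y : E ↦ ‖y‖ ^ q • y)
      (‖x‖ ^ q • ContinuousLinearMap.id ℝ E +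
        ((q * ‖x‖ ^ (q - 2)) • innerSL ℝ x).smulRight x) x := by
  obtain rfl | hq := hq.eq_or_lt
  · simpa using! hasFDerivAt_id x
  obtain rfl | hx := eq_or_ne x 0
  · have isLittleO_self : (fun y : E ↦ ‖y‖ ^ q • y) =o[𝓝 0] fun y ↦ y := by
      simpa using ((isLittleO_one_iff ℝ).2 (tendsto_norm_rpow_nhds_zero hq)).smul_isBigO
        (isBigO_refl (fun y : E ↦ y) (𝓝 0))
    exact .of_isLittleO (by simpa [Real.zero_rpow hq.ne'] using isLittleO_self)
  · exact (hasFDerivAt_norm_rpow_of_ne_zero hx q).smul (hasFDerivAt_id x)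

theorem contDiff_norm_rpow_smul_self {q : ℝ} (hq : 0 ≤ q) :
    ContDiff ℝ 1 (fun y : E ↦ ‖y‖ ^ q • y) := by
  obtain rfl | hq := hq.eq_or_lt
  · simpa using contDiff_fun_id
  have norm_radial_part (y : E) :
      ‖((q * ‖y‖ ^ (q - 2)) • innerSL ℝ y).smulRight y‖ = q * ‖y‖ ^ q := by
    simp [norm_smul, abs_of_pos hq, Real.abs_rpow_of_nonneg, mul_assoc, ← sq,
      ← mul_rpow_sub_two_mul_sq (norm_nonneg y) q]
  refine contDiff_one_iff_hasFDerivAt.2 ⟨_, ?_, hasFDerivAt_norm_rpow_smul_self hq.le⟩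
  have continuous_norm_rpow : Continuous fun y : E ↦ ‖y‖ ^ q :=
    continuous_norm.rpow_const fun _ ↦ .inr hq.le
  refine (continuous_norm_rpow.smul continuous_const).add
    (continuous_iff_continuousAt.2 fun x ↦ ?_)
  obtain rfl | hx := eq_or_ne x 0
  · rw [ContinuousAt, tendsto_iff_norm_sub_tendsto_zero]
    simpa [norm_radial_part] using (tendsto_norm_rpow_nhds_zero hq).const_mul q
  · have continuousAt_coeff : ContinuousAt (fun y : E ↦ (q * ‖y‖ ^ (q - 2)) • innerSL ℝ y) x := by
      fun_prop (discharger := simp [hx])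
    exact ((ContinuousLinearMap.smulRightL ℝ E E).continuous.continuousAt.comp
      continuousAt_coeff).clm_apply continuousAt_id

theorem fderiv_norm_rpow_eq_innerSL {p : ℝ} (hp : 1 < p) :
    fderiv ℝ (fun y : E ↦ ‖y‖ ^ p) = fun y ↦ p • innerSL ℝ (‖y‖ ^ (p - 2) • y) := by
  ext y v
  simp [fderiv_norm_rpow y hp, mul_assoc]

theorem contDiff_two_norm_rpow {p : ℝ} (hp : 2 ≤ p) : ContDiff ℝ 2 (fun y : E ↦ ‖y‖ ^ p) := by
  have hp1 : 1 < p := by linarith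
  rw [← one_add_one_eq_two, contDiff_succ_iff_fderiv, fderiv_norm_rpow_eq_innerSL hp1]
  exact ⟨differentiable_norm_rpow hp1, by simp,
    ((innerSL ℝ : E →L[ℝ] E →L[ℝ] ℝ).contDiff.comp
      (contDiff_norm_rpow_smul_self (sub_nonneg.2 hp))).const_smul p⟩

theorem hasFDerivAt_fderiv_norm_rpow {p : ℝ} (hp : 2 ≤ p) (x : E) :
    HasFDerivAt (fderiv ℝ fun y : E ↦ ‖y‖ ^ p)
      (p • (innerSL ℝ : E →L[ℝ] E →L[ℝ] ℝ) ∘L (‖x‖ ^ (p - 2) • ContinuousLinearMap.id ℝ E +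
        (((p - 2) * ‖x‖ ^ (p - 2 - 2)) • innerSL ℝ x).smulRight x)) x := by
  rw [fderiv_norm_rpow_eq_innerSL (by linarith)]
  exact ((innerSL ℝ : E →L[ℝ] E →L[ℝ] ℝ).hasFDerivAt.comp x
    (hasFDerivAt_norm_rpow_smul_self (sub_nonneg.2 hp) x)).const_smul p

theorem laplacian_norm_rpow [FiniteDimensional ℝ E] {p : ℝ} (hp : 2 ≤ p) (x : E) :
    Δ (fun y : E ↦ ‖y‖ ^ p) x = p * (p + Module.finrank ℝ E - 2) * ‖x‖ ^ (p - 2) := by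
  let b := stdOrthonormalBasis ℝ E
  have hessian (i) : fderiv ℝ (fderiv ℝ fun y : E ↦ ‖y‖ ^ p) x (b i) (b i) =
      p * (‖x‖ ^ (p - 2) + (p - 2) * ‖x‖ ^ (p - 2 - 2) * inner ℝ x (b i) ^ 2) := by
    calc fderiv ℝ (fderiv ℝ fun y : E ↦ ‖y‖ ^ p) x (b i) (b i)
      _ = p * inner ℝ (‖x‖ ^ (p - 2) • b i +
          ((p - 2) * ‖x‖ ^ (p - 2 - 2) * inner ℝ x (b i)) • x) (b i) := by
        rw [(hasFDerivAt_fderiv_norm_rpow hp x).fderiv]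
        rfl
      _ = p * (‖x‖ ^ (p - 2) + (p - 2) * ‖x‖ ^ (p - 2 - 2) * inner ℝ x (b i) ^ 2) := by
        rw [inner_add_left, real_inner_smul_left, real_inner_smul_left, b.inner_eq_one]
        ring
  calc Δ (fun y : E ↦ ‖y‖ ^ p) x
    _ = ∑ i, p * (‖x‖ ^ (p - 2) + (p - 2) * ‖x‖ ^ (p - 2 - 2) * inner ℝ x (b i) ^ 2) := by
      simp [laplacian_eq_iteratedFDeriv_orthonormalBasis _ b, iteratedFDeriv_two_apply, hessian]
    _ = p * (Module.finrank ℝ E * ‖x‖ ^ (p - 2) + (p - 2) * ‖x‖ ^ (p - 2)) := by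
      simp [← Finset.mul_sum, Finset.sum_add_distrib, b.sum_sq_inner_left,
        mul_rpow_sub_two_mul_sq]
    _ = p * (p + Module.finrank ℝ E - 2) * ‖x‖ ^ (p - 2) := by ring

end NormRpow

section ComplexPlane

variable {E : Type*} [NormedAddCommGroup E] [NormedSpace ℝ E]

theorem laplacian_eq_fderiv_fderiv (u : ℂ → E) (z : ℂ) :
    Δ u z = fderiv ℝ (fderiv ℝ u) z 1 1 + fderiv ℝ (fderiv ℝ u) z I I := by
  simp [laplacian_eq_iteratedFDeriv_complexPlane, iteratedFDeriv_two_apply]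

theorem bilin_self_add_bilin_mul_I_self (B : ℂ →L[ℝ] ℂ →L[ℝ] E) (w : ℂ) :
    B w w + B (w * I) (w * I) = ‖w‖ ^ 2 • (B 1 1 + B I I) := by
  have w_eq : w = w.re • 1 + w.im • I := by simp
  have mul_I_eq : w * I = w.re • I - w.im • 1 := by
    apply Complex.ext <;> simp
  rw [mul_I_eq, ← Complex.normSq_eq_norm_sq, Complex.normSq_apply]
  nth_rewrite 1 2 [w_eq]
  simp only [map_add, map_sub, map_smul, add_apply, sub_apply, smul_apply]
  module

theorem hasFDerivAt_mul_deriv {h : ℂ → ℂ} {z : ℂ} (hh : DifferentiableAt ℂ h z) :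
    HasFDerivAt h (ContinuousLinearMap.mul ℝ ℂ (deriv h z)) z := by
  refine hh.hasDerivAt.complexToReal_fderiv.congr_fderiv ?_
  ext w
  simp

theorem fderiv_fderiv_comp_analyticAt {g : ℂ → E} {f : ℂ → ℂ} {z : ℂ}
    (hg : ContDiffAt ℝ 2 g (f z)) (hf : AnalyticAt ℂ f z) (v w : ℂ) :
    fderiv ℝ (fderiv ℝ (g ∘ f)) z v w =
      fderiv ℝ (fderiv ℝ g) (f z) (deriv f z * v) (deriv f z * w) +
        fderiv ℝ g (f z) (deriv (deriv f) z * v * w) := by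
  have fderiv_comp : fderiv ℝ (g ∘ f) =ᶠ[𝓝 z]
      fun y ↦ (fderiv ℝ g (f y)).comp (ContinuousLinearMap.mul ℝ ℂ (deriv f y)) := by
    filter_upwards [hf.eventually_analyticAt, hf.continuousAt.eventually
      (hg.eventually (by simp))] with y hfy hgy
    exact ((hgy.differentiableAt two_ne_zero).hasFDerivAt.comp y
      (hasFDerivAt_mul_deriv hfy.differentiableAt)).fderiv
  have hasFDerivAt_fderiv_g : HasFDerivAt (fun y ↦ fderiv ℝ g (f y)) _ z :=
    ((hg.fderiv_right (m := 1) le_rfl).differentiableAt one_ne_zero).hasFDerivAt.comp z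
      (hasFDerivAt_mul_deriv hf.differentiableAt)
  have hasFDerivAt_deriv_f : HasFDerivAt (fun y ↦ ContinuousLinearMap.mul ℝ ℂ (deriv f y)) _ z :=
    (ContinuousLinearMap.mul ℝ ℂ).hasFDerivAt.comp z
      (hasFDerivAt_mul_deriv hf.deriv.differentiableAt)
  rw [fderiv_comp.fderiv_eq, (hasFDerivAt_fderiv_g.clm_comp hasFDerivAt_deriv_f).fderiv]
  simp [add_comm]

theorem laplacian_comp_analyticAt {g : ℂ → E} {f : ℂ → ℂ} {z : ℂ}
    (hg : ContDiffAt ℝ 2 g (f z)) (hf : AnalyticAt ℂ f z) :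
    Δ (g ∘ f) z = ‖deriv f z‖ ^ 2 • Δ g (f z) := by
  have second_deriv_cancel : fderiv ℝ g (f z) (deriv (deriv f) z) +
      fderiv ℝ g (f z) (deriv (deriv f) z * I * I) = 0 := by
    simp [mul_assoc]
  simp only [laplacian_eq_fderiv_fderiv, fderiv_fderiv_comp_analyticAt hg hf, mul_one,
    ← bilin_self_add_bilin_mul_I_self]
  rw [add_add_add_comm, second_deriv_cancel, add_zero]

end ComplexPlane

section Circle

open Set

variable {E : Type*} [NormedAddCommGroup E] [NormedSpace ℝ E]

theorem circleMap_zero_eq_smul (s θ : ℝ) : circleMap 0 s θ = s • circleMap 0 1 θ := by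
  simp [circleMap]

theorem hasFDerivAt_circleMap_uncurry (c : ℂ) (q : ℝ × ℝ) :
    HasFDerivAt (fun x : ℝ × ℝ ↦ circleMap c x.1 x.2)
      ((ContinuousLinearMap.fst ℝ ℝ ℝ).smulRight (circleMap 0 1 q.2) +
        (ContinuousLinearMap.snd ℝ ℝ ℝ).smulRight (circleMap 0 q.1 q.2 * I)) q := by
  have direction : HasFDerivAt (fun x : ℝ × ℝ ↦ circleMap 0 1 x.2) _ q :=
    (hasDerivAt_circleMap 0 1 q.2).hasFDerivAt.comp q hasFDerivAt_snd
  convert! ((hasFDerivAt_fst (𝕜 := ℝ) (p := q)).smul direction).const_add c using 1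
  · ext x; simp [circleMap]
  · ext <;> simp [circleMap, mul_assoc]

theorem hasFDerivAt_comp_circleMap {F : ℂ → E} {F' : ℂ →L[ℝ] E} {c : ℂ} {q : ℝ × ℝ}
    (hF : HasFDerivAt F F' (circleMap c q.1 q.2)) :
    HasFDerivAt (fun x : ℝ × ℝ ↦ F (circleMap c x.1 x.2))
      (F' ∘L ((ContinuousLinearMap.fst ℝ ℝ ℝ).smulRight (circleMap 0 1 q.2) +
        (ContinuousLinearMap.snd ℝ ℝ ℝ).smulRight (circleMap 0 q.1 q.2 * I))) q :=
  hF.comp q (hasFDerivAt_circleMap_uncurry c q)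

theorem circleMap_mem_ball_of_mem_Ioo (c : ℂ) {R s : ℝ} (hs : s ∈ Ioo 0 R) (θ : ℝ) :
    circleMap c s θ ∈ ball c R := by
  simpa [circleMap, abs_of_pos hs.1] using hs.2

theorem circleMap_mem_closedBall_of_mem_Icc (c : ℂ) {R s : ℝ} (hs : s ∈ Icc 0 R) (θ : ℝ) :
    circleMap c s θ ∈ closedBall c R :=
  closedBall_subset_closedBall hs.2 (circleMap_mem_closedBall c hs.1 θ)

theorem continuousOn_comp_circleMap {X : Type*} [TopologicalSpace X] {F : ℂ → X} {c : ℂ} {R : ℝ}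
    (hF : ContinuousOn F (closedBall c R)) (t : Set ℝ) :
    ContinuousOn (fun q : ℝ × ℝ ↦ F (circleMap c q.1 q.2)) (Icc 0 R ×ˢ t) :=
  hF.comp (by fun_prop) fun q hq ↦ circleMap_mem_closedBall_of_mem_Icc c hq.1 q.2

theorem continuousOn_comp_circleMap_uIcc {X : Type*} [TopologicalSpace X] {F : ℂ → X} {c : ℂ}
    {R : ℝ} (hR : 0 ≤ R) (hF : ContinuousOn F (closedBall c R)) (t : Set ℝ) :
    ContinuousOn (fun q : ℝ × ℝ ↦ F (circleMap c q.1 q.2)) (uIcc 0 R ×ˢ t) :=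
  uIcc_of_le hR ▸ continuousOn_comp_circleMap hF t

theorem smul_indicator_ball_polarCoord_symm (F : ℂ → E) (c : ℂ) (R : ℝ) {q : ℝ × ℝ}
    (hq : q ∈ polarCoord.target) :
    q.1 • (ball c R).indicator F (c + Complex.polarCoord.symm q) =
      (Ioo 0 R ×ˢ Ioo (-π) π).indicator (fun x ↦ x.1 • F (circleMap c x.1 x.2)) q := by
  obtain ⟨s, θ⟩ := q
  have symm_eq_circleMap : c + Complex.polarCoord.symm (s, θ) = circleMap c s θ := by
    simp [circleMap, Complex.exp_mul_I]
  have mem_ball_iff : circleMap c s θ ∈ ball c R ↔ (s, θ) ∈ Ioo 0 R ×ˢ Ioo (-π) π := by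
    simp_all [abs_of_pos, circleMap]
  classical
  simp only [symm_eq_circleMap, indicator_apply, mem_ball_iff, smul_ite, smul_zero]

theorem integral_circleMap_neg_pi_pi (F : ℂ → E) (c : ℂ) (s : ℝ) :
    ∫ θ in (-π)..π, F (circleMap c s θ) = ∫ θ in 0..2 * π, F (circleMap c s θ) := by
  simpa [two_mul] using ((periodic_circleMap c s).comp F).intervalIntegral_add_eq (-π) 0

theorem integral_ball_eq_integral_circleMap {F : ℂ → E} {c : ℂ} {R : ℝ} (hR : 0 ≤ R)
    (hF : ContinuousOn F (closedBall c R)) :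
    ∫ z in ball c R, F z = ∫ s in 0..R, ∫ θ in 0..2 * π, s • F (circleMap c s θ) := by
  have integrableOn_rectangle : IntegrableOn (fun q : ℝ × ℝ ↦ q.1 • F (circleMap c q.1 q.2))
      (Ioo 0 R ×ˢ Ioo (-π) π) (volume.prod volume) :=
    ((continuousOn_fst.smul (continuousOn_comp_circleMap hF _)).integrableOn_compact
      (isCompact_Icc.prod isCompact_Icc)).mono_set
        (prod_mono Ioo_subset_Icc_self Ioo_subset_Icc_self)
  have rectangle_subset : Ioo 0 R ×ˢ Ioo (-π) π ⊆ polarCoord.target :=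
    prod_mono_left Ioo_subset_Ioi_self
  calc ∫ z in ball c R, F z
    _ = ∫ q in polarCoord.target, q.1 • (ball c R).indicator F (c + Complex.polarCoord.symm q) := by
      rw [Complex.integral_comp_polarCoord_symm fun z ↦ (ball c R).indicator F (c + z),
        integral_add_left_eq_self, integral_indicator measurableSet_ball]
    _ = ∫ q in Ioo 0 R ×ˢ Ioo (-π) π, q.1 • F (circleMap c q.1 q.2) := by
      rw [setIntegral_congr_fun polarCoord.open_target.measurableSet
        fun q hq ↦ smul_indicator_ball_polarCoord_symm F c R hq,
        setIntegral_indicator (measurableSet_Ioo.prod measurableSet_Ioo),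
        inter_eq_right.2 rectangle_subset]
    _ = ∫ s in 0..R, ∫ θ in (-π)..π, s • F (circleMap c s θ) := by
      rw [Measure.volume_eq_prod, setIntegral_prod _ integrableOn_rectangle]
      simp only [intervalIntegral.integral_of_le, hR, neg_le_self Real.pi_pos.le,
        integral_Ioc_eq_integral_Ioo]
    _ = ∫ s in 0..R, ∫ θ in 0..2 * π, s • F (circleMap c s θ) := by
      exact intervalIntegral.integral_congr fun s _ ↦
        integral_circleMap_neg_pi_pi (fun z ↦ s • F z) c s

-- For `A = V z`, `B = DV z` at `z = c + s e`, `e = exp (θ I)`, the left-hand side is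
-- `∂ₛ (V z (s e)) + ∂_θ (V z (e I))`; the factor `s` absorbs the Jacobian of polar coordinates.
theorem polar_divergence_eq_smul (B : ℂ →L[ℝ] ℂ →L[ℝ] E) (A : ℂ →L[ℝ] E) (s θ : ℝ) :
    A (circleMap 0 1 θ) + B (circleMap 0 1 θ) (circleMap 0 s θ) +
      (A (I * (circleMap 0 1 θ * I)) + B (circleMap 0 s θ * I) (circleMap 0 1 θ * I)) =
      s • (B 1 1 + B I I) := by
  have trace_rotated := bilin_self_add_bilin_mul_I_self B (circleMap 0 1 θ)
  rw [norm_circleMap_zero, abs_one, one_pow, one_smul] at trace_rotated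
  rw [circleMap_zero_eq_smul s, ← trace_rotated, mul_left_comm, Complex.I_mul_I, mul_neg_one,
    map_neg, smul_mul_assoc, map_smul, map_smul, smul_apply]
  module

theorem integral_circleMap_eq_integral_divergence {V : ℂ → ℂ →L[ℝ] E}
    {V' : ℂ → ℂ →L[ℝ] ℂ →L[ℝ] E} {c : ℂ} {R : ℝ} (hR : 0 ≤ R)
    (hV : ContinuousOn V (closedBall c R)) (hV' : ∀ z ∈ ball c R, HasFDerivAt V (V' z) z)
    (hdiv : ContinuousOn (fun z ↦ V' z 1 1 + V' z I I) (closedBall c R)) :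
    ∫ θ in 0..2 * π, V (circleMap c R θ) (circleMap 0 R θ) =
      ∫ z in ball c R, (V' z 1 1 + V' z I I) := by
  have continuousOn_V := continuousOn_comp_circleMap_uIcc hR hV (uIcc 0 (2 * π))
  have hasFDerivAt_V (q : ℝ × ℝ)
      (hq : q ∈ Ioo (min 0 R) (max 0 R) ×ˢ Ioo (min 0 (2 * π)) (max 0 (2 * π))) :=
    hasFDerivAt_comp_circleMap <|
      hV' _ (circleMap_mem_ball_of_mem_Ioo c (by simpa [hR] using hq.1) q.2)
  have divergence_eq (q : ℝ × ℝ) :=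
    polar_divergence_eq_smul (V' (circleMap c q.1 q.2)) (V (circleMap c q.1 q.2)) q.1 q.2
  have divergence_theorem := integral2_divergence_prod_of_hasFDerivAt
    (fun q ↦ V (circleMap c q.1 q.2) (circleMap 0 q.1 q.2))
    (fun q ↦ V (circleMap c q.1 q.2) (circleMap 0 1 q.2 * I)) _ _ 0 0 R (2 * π)
    (continuousOn_V.clm_apply (by fun_prop)) (continuousOn_V.clm_apply (by fun_prop))
    (fun q hq ↦ (hasFDerivAt_V q hq).clm_apply (hasFDerivAt_circleMap_uncurry 0 q))
    (fun q hq ↦ (hasFDerivAt_V q hq).clm_apply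
      (((hasDerivAt_circleMap 0 1 q.2).hasFDerivAt.comp q hasFDerivAt_snd).mul_const _)) ?_
  · have periodic (a : ℂ) (s : ℝ) : circleMap a s (2 * π) = circleMap a s 0 :=
      (periodic_circleMap a s).eq
    rw [integral_ball_eq_integral_circleMap hR hdiv]
    simpa [divergence_eq (_, _), periodic] using divergence_theorem.symm
  · have : ContinuousOn (fun q : ℝ × ℝ ↦
        q.1 • (V' (circleMap c q.1 q.2) 1 1 + V' (circleMap c q.1 q.2) I I))
        (uIcc 0 R ×ˢ uIcc 0 (2 * π)) :=
      continuousOn_fst.smul (continuousOn_comp_circleMap_uIcc hR hdiv _)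
    convert! this.integrableOn_compact (isCompact_uIcc.prod isCompact_uIcc) using 2 with q
    · simp [← divergence_eq q]
    · infer_instance

variable [CompleteSpace E]

theorem integral_circleMap_eq_add_integral_radial_deriv {u : ℂ → E} {u' : ℂ → ℂ →L[ℝ] E} {c : ℂ}
    {R : ℝ} (hR : 0 ≤ R) (hu : ContinuousOn u (closedBall c R))
    (hu' : ∀ z ∈ ball c R, HasFDerivAt u (u' z) z) (hu'c : ContinuousOn u' (closedBall c R)) :
    ∫ θ in 0..2 * π, u (circleMap c R θ) =
      (2 * π) • u c + ∫ s in 0..R, ∫ θ in 0..2 * π, u' (circleMap c s θ) (circleMap 0 1 θ) := by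
  -- A divergence with vanishing second component: integration in `s` and Fubini in one step.
  have radial_deriv := integral2_divergence_prod_of_hasFDerivAt
    (fun q ↦ u (circleMap c q.1 q.2)) (fun _ ↦ 0) _ _ 0 0 R (2 * π)
    (continuousOn_comp_circleMap_uIcc hR hu _) continuousOn_const
    (fun q hq ↦ hasFDerivAt_comp_circleMap <|
      hu' _ (circleMap_mem_ball_of_mem_Ioo c (by simpa [hR] using hq.1) q.2))
    (fun q _ ↦ hasFDerivAt_const 0 q) ?_
  · rw [← sub_eq_iff_eq_add']
    simpa using radial_deriv.symm
  · have : ContinuousOn (fun q : ℝ × ℝ ↦ u' (circleMap c q.1 q.2) (circleMap 0 1 q.2))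
        (uIcc 0 R ×ˢ uIcc 0 (2 * π)) :=
      (continuousOn_comp_circleMap_uIcc hR hu'c _).clm_apply (by fun_prop)
    simpa using! this.integrableOn_compact (isCompact_uIcc.prod isCompact_uIcc)

theorem circleAverage_eq_add_integral_laplacian {u : ℂ → E} {c : ℂ} {R : ℝ} (hR : 0 ≤ R)
    (hu : ∀ z ∈ closedBall c R, ContDiffAt ℝ 2 u z) :
    Real.circleAverage u c R =
      u c + (2 * π)⁻¹ • ∫ ρ in 0..R, ρ⁻¹ • ∫ z in ball c ρ, Δ u z := by
  have contDiffAt_fderiv (z) (hz : z ∈ closedBall c R) : ContDiffAt ℝ 1 (fderiv ℝ u) z :=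
    (hu z hz).fderiv_right le_rfl
  have continuousOn_fderiv : ContinuousOn (fderiv ℝ u) (closedBall c R) := fun z hz ↦
    (contDiffAt_fderiv z hz).continuousAt.continuousWithinAt
  have continuousOn_hessian : ContinuousOn (fderiv ℝ (fderiv ℝ u)) (closedBall c R) := fun z hz ↦
    ((contDiffAt_fderiv z hz).continuousAt_fderiv one_ne_zero).continuousWithinAt
  have flux_eq : ∀ ρ ∈ Ioo 0 R,
      ∫ θ in 0..2 * π, fderiv ℝ u (circleMap c ρ θ) (circleMap 0 1 θ) =
        ρ⁻¹ • ∫ z in ball c ρ, Δ u z := by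
    intro ρ hρ
    have subset := closedBall_subset_closedBall (x := c) hρ.2.le
    have flux := integral_circleMap_eq_integral_divergence hρ.1.le (continuousOn_fderiv.mono subset)
      (fun z hz ↦ ((contDiffAt_fderiv z (subset (ball_subset_closedBall hz))).differentiableAt
        one_ne_zero).hasFDerivAt)
      (by have := continuousOn_hessian.mono subset; fun_prop)
    simp only [laplacian_eq_fderiv_fderiv, ← flux, circleMap_zero_eq_smul ρ, map_smul,
      intervalIntegral.integral_smul, inv_smul_smul₀ hρ.1.ne']
  rw [Real.circleAverage_def, integral_circleMap_eq_add_integral_radial_deriv hR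
    (fun z hz ↦ (hu z hz).continuousAt.continuousWithinAt)
    (fun z hz ↦ ((hu z (ball_subset_closedBall hz)).differentiableAt two_ne_zero).hasFDerivAt)
    continuousOn_fderiv, smul_add, inv_smul_smul₀ Real.two_pi_pos.ne',
    intervalIntegral.integral_congr_Ioo_of_le hR flux_eq]

end Circle

section HardyStein

theorem laplacian_norm_rpow_comp_analyticAt {p : ℝ} (hp : 2 ≤ p) {f : ℂ → ℂ} {z : ℂ}
    (hf : AnalyticAt ℂ f z) :
    Δ (fun w ↦ ‖f w‖ ^ p) z = p ^ 2 * (‖f z‖ ^ (p - 2) * ‖deriv f z‖ ^ 2) := by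
  calc Δ ((fun w : ℂ ↦ ‖w‖ ^ p) ∘ f) z
    _ = ‖deriv f z‖ ^ 2 * (p * (p + 2 - 2) * ‖f z‖ ^ (p - 2)) := by
      rw [laplacian_comp_analyticAt (contDiff_two_norm_rpow hp).contDiffAt hf,
        laplacian_norm_rpow hp, Complex.finrank_real_complex, smul_eq_mul, Nat.cast_two]
    _ = p ^ 2 * (‖f z‖ ^ (p - 2) * ‖deriv f z‖ ^ 2) := by ring

theorem circleAverage_norm_rpow_eq_add_integral {p : ℝ} (hp : 2 ≤ p) {f : ℂ → ℂ} {c : ℂ} {R : ℝ}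
    (hR : 0 ≤ R) (hf : AnalyticOnNhd ℂ f (closedBall c R)) :
    Real.circleAverage (fun z ↦ ‖f z‖ ^ p) c R =
      ‖f c‖ ^ p + p ^ 2 / (2 * π) *
        ∫ ρ in 0..R, 1 / ρ * ∫ z in ball c ρ, ‖f z‖ ^ (p - 2) * ‖deriv f z‖ ^ 2 := by
  have contDiffAt_norm_rpow (z) (hz : z ∈ closedBall c R) :
      ContDiffAt ℝ 2 (fun w ↦ ‖f w‖ ^ p) z :=
    (contDiff_two_norm_rpow hp).contDiffAt.comp z ((hf z hz).contDiffAt.restrict_scalars ℝ)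
  have integral_laplacian : ∀ ρ ∈ Set.Ioo 0 R, ρ⁻¹ • ∫ z in ball c ρ, Δ (fun w ↦ ‖f w‖ ^ p) z =
      p ^ 2 * (1 / ρ * ∫ z in ball c ρ, ‖f z‖ ^ (p - 2) * ‖deriv f z‖ ^ 2) := by
    intro ρ hρ
    rw [setIntegral_congr_fun measurableSet_ball fun z hz ↦ laplacian_norm_rpow_comp_analyticAt hp
      (hf z (ball_subset_closedBall (ball_subset_ball hρ.2.le hz))), integral_const_mul,
      smul_eq_mul, one_div, mul_left_comm]
  rw [circleAverage_eq_add_integral_laplacian hR contDiffAt_norm_rpow,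
    intervalIntegral.integral_congr_Ioo_of_le hR integral_laplacian,
    intervalIntegral.integral_const_mul, smul_eq_mul, ← mul_assoc, inv_mul_eq_div]

end HardyStein

theorem hardy_stein_identity
    (p : ℝ) (hp : 2 ≤ p)
    (f : ℂ → ℂ) (hf : DifferentiableOn ℂ f (ball (0 : ℂ) 1))
    (r : ℝ) (hr0 : 0 < r) (hr1 : r < 1) :
    (1 / (2 * Real.pi)) *
        ∫ θ in (0 : ℝ)..(2 * Real.pi),
          ‖f ((Real.sqrt r : ℂ) * Complex.exp (θ * Complex.I))‖ ^ p =
      ‖f 0‖ ^ p +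
        (p ^ 2 / (2 * Real.pi)) *
          ∫ ρ in (0 : ℝ)..(Real.sqrt r),
            (1 / ρ) * ∫ z in ball (0 : ℂ) ρ, ‖f z‖ ^ (p - 2) * ‖deriv f z‖ ^ 2 := by
  have sqrt_lt_one : √r < 1 := (Real.sqrt_lt' one_pos).2 (by rwa [one_pow])
  have analytic : AnalyticOnNhd ℂ f (closedBall 0 (√r)) :=
    (hf.analyticOnNhd isOpen_ball).mono (closedBall_subset_ball sqrt_lt_one)
  simpa only [Real.circleAverage_def, circleMap_zero, smul_eq_mul, one_div] using
    circleAverage_norm_rpow_eq_add_integral hp (Real.sqrt_nonneg r) analytic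
end
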